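/- arXiv:2201.00306 — 3 statements merged into one kernel-verified Lean document; each statement's English description precedes it below -/
import Mathlib

section
/- Let n ≥ 3 and k ≥ 1 be integers. Then the subgroup of SL_n(ℤ) generated by the upper triangular unipotent matrices and the lower triangular unipotent matrices lying in the principal congruence subgroup SL_n(kℤ) has finite index in SL_n(ℤ). -/
/-!
Let `H` be a subgroup of `SL_n(ℤ)`, `n ≥ 3`, containing the elementary matrices `1 + c E_{ij}` with
`k ∣ c`; the group of the theorem is of this kind. Put `q = k²` and let `N` be the normal closure
of the elementary matrices `1 + c E_{ij}` with `q ∣ c`. The proof shows that `N ≤ H` and that `N`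
already has finite index.

*`N ≤ H`* (`HasElem.conj`). A conjugate of `1 + q c E_{ij}` has the form `1 + q c v wᵀ` with `v`
unimodular and `w ⬝ v = 0`. Such a `w` is a combination of the Koszul relations
`v_j e_i - v_i e_j`, so `1 + q c v wᵀ` is a product of commuting factors, one for each such
relation (`HasElem.rankOne`). Each factor lies in `H` because `n ≥ 3` leaves a third index `l`,
through which the part supported on the rows and columns `i, j` becomes a commutator of elements
of `H` of level `k` (`HasElem.pair`).

*`N` has finite index* (`HasElem.finiteIndex_of_normal`). The principal congruence subgroup of
level `q` is central modulo `N` (`principalCongr_le_centralMod`): up to conjugation and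
multiplication by `N`, each of its elements `g` is a block matrix fixing one basis vector and one
coordinate, and such a `g` commutes modulo `N` with `1 + v e_nᵀ` and `1 + e_n wᵀ`, which generate
`SL_n(ℤ)`. The reduction to block form rests on the stable range property of `ℤ`
(`exists_shift`). Hence the centre of `SL_n(ℤ) / N` has finite index; by Schur's theorem the
commutator subgroup of `SL_n(ℤ) / N` is finite, and it is the whole group because `SL_n(ℤ)` is
perfect (`commutator_eq_top`). Perfectness and the generation statement above both use that
elementary matrices generate `SL_n(ℤ)` (`HasElem.eq_top`), which is the Euclidean algorithm.
-/

open Matrix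
open scoped commutatorElement

/-! ### Membership of matrices `1 + A` in a subgroup -/

section SpecialLinear

variable {ι : Type*} [Fintype ι] [DecidableEq ι] {H N : Subgroup (SpecialLinearGroup ι ℤ)}

/-- The matrix `M` is (the underlying matrix of) an element of the subgroup `H` of `SL_ι(ℤ)`. -/
def InH (H : Subgroup (SpecialLinearGroup ι ℤ)) (M : Matrix ι ι ℤ) : Prop :=
  ∃ g ∈ H, g.1 = M

lemma InH.mem {g : SpecialLinearGroup ι ℤ} (h : InH H g.1) : g ∈ H := by
  obtain ⟨g', hg', e⟩ := h
  rwa [← Subtype.ext e]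

lemma InH.one_add_add {A B : Matrix ι ι ℤ} (hA : InH H (1 + A)) (hB : InH H (1 + B))
    (hAB : A * B = 0) : InH H (1 + (A + B)) := by
  obtain ⟨a, ha, ea⟩ := hA
  obtain ⟨b, hb, eb⟩ := hB
  refine ⟨a * b, mul_mem ha hb, ?_⟩
  change a.1 * b.1 = _
  rw [ea, eb]
  simp only [mul_add, add_mul, hAB, mul_one, one_mul]
  abel

lemma InH.one_add_sum {κ : Type*} (s : Finset κ) (A : κ → Matrix ι ι ℤ)
    (hA : ∀ x ∈ s, InH H (1 + A x)) (hAA : ∀ x ∈ s, ∀ y ∈ s, x ≠ y → A x * A y = 0) :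
    InH H (1 + ∑ x ∈ s, A x) := by
  classical
  induction s using Finset.induction_on with
  | empty => exact ⟨1, one_mem _, by simp⟩
  | insert x s hx ih =>
    rw [Finset.sum_insert hx]
    refine (hA x (by simp)).one_add_add (ih (fun y hy => hA y (by simp [hy]))
      (fun y hy z hz => hAA y (by simp [hy]) z (by simp [hz]))) ?_
    rw [Finset.mul_sum]
    refine Finset.sum_eq_zero fun y hy => hAA x (by simp) y (by simp [hy]) ?_
    rintro rfl
    exact hx hy

lemma coe_inv_of_sq_zero {g : SpecialLinearGroup ι ℤ} {A : Matrix ι ι ℤ} (hg : g.1 = 1 + A)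
    (hA : A * A = 0) : (g⁻¹).1 = 1 - A := by
  have h1 : g.1 * (g⁻¹).1 = 1 := congrArg Subtype.val (mul_inv_cancel g)
  have h2 : (1 - A) * g.1 = 1 := by
    rw [hg]; simp only [mul_add, sub_mul, hA, mul_one, one_mul]; abel
  calc (g⁻¹).1 = ((1 - A) * g.1) * (g⁻¹).1 := by rw [h2, one_mul]
    _ = 1 - A := by rw [mul_assoc, h1, mul_one]

/-- If `A² = B² = BA = 0`, the commutator of `1 + A` and `1 + B` is `1 + AB`. -/
lemma coe_commutator {a b : SpecialLinearGroup ι ℤ} {A B : Matrix ι ι ℤ} (ha : a.1 = 1 + A)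
    (hb : b.1 = 1 + B) (hA : A * A = 0) (hB : B * B = 0) (hBA : B * A = 0) :
    (⁅a, b⁆).1 = 1 + A * B := by
  change a.1 * b.1 * (a⁻¹).1 * (b⁻¹).1 = _
  rw [coe_inv_of_sq_zero ha hA, coe_inv_of_sq_zero hb hB, ha, hb]
  have e1 : (1 + A) * (1 + B) * (1 - A) = 1 + B + A * B := by
    have : A * B * A = 0 := by rw [mul_assoc, hBA, mul_zero]
    simp only [mul_add, add_mul, mul_sub, hA, hBA, this, mul_one, one_mul]; abel
  have : A * B * B = 0 := by rw [mul_assoc, hB, mul_zero]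
  rw [e1]
  simp only [add_mul, mul_sub, hB, this, mul_one, one_mul]; abel

lemma InH.one_add_mul {A B : Matrix ι ι ℤ} (hA' : InH H (1 + A)) (hB' : InH H (1 + B))
    (hA : A * A = 0) (hB : B * B = 0) (hBA : B * A = 0) : InH H (1 + A * B) := by
  obtain ⟨a, ha, ea⟩ := hA'
  obtain ⟨b, hb, eb⟩ := hB'
  exact ⟨⁅a, b⁆, by
    rw [commutatorElement_def]
    exact mul_mem (mul_mem (mul_mem ha hb) (inv_mem ha)) (inv_mem hb),
    coe_commutator ea eb hA hB hBA⟩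

/-- The subgroup `H` contains every elementary matrix `1 + c E_{ij}` with `q ∣ c`. -/
def HasElem (H : Subgroup (SpecialLinearGroup ι ℤ)) (q : ℤ) : Prop :=
  ∀ i j : ι, i ≠ j → ∀ c : ℤ, q ∣ c → InH H (1 + single i j c)

lemma HasElem.col {q : ℤ} (hH : HasElem H q) (j : ι) (v : ι → ℤ) (hj : v j = 0)
    (hv : ∀ i, q ∣ v i) : InH H (1 + vecMulVec v (Pi.single j 1)) := by
  have e : vecMulVec v (Pi.single j 1) = ∑ i ∈ Finset.univ.erase j, single i j (v i) := by
    ext a b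
    simp only [vecMulVec_apply, Matrix.sum_apply, single_apply, Pi.single_apply]
    rw [Finset.sum_eq_ite a]
    all_goals grind
  rw [e]
  refine InH.one_add_sum _ _ (fun i hi => hH i j (by simpa using hi) _ (hv i)) ?_
  intro x hx y hy hxy
  exact single_mul_single_of_ne (h := (Finset.ne_of_mem_erase hy).symm) ..

lemma HasElem.row {q : ℤ} (hH : HasElem H q) (i : ι) (w : ι → ℤ) (hi : w i = 0)
    (hw : ∀ j, q ∣ w j) : InH H (1 + vecMulVec (Pi.single i 1) w) := by
  have e : vecMulVec (Pi.single i 1) w = ∑ j ∈ Finset.univ.erase i, single i j (w j) := by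
    ext a b
    simp only [vecMulVec_apply, Matrix.sum_apply, single_apply, Pi.single_apply]
    rw [Finset.sum_eq_ite b]
    all_goals grind
  rw [e]
  refine InH.one_add_sum _ _ (fun j hj => hH i j ((Finset.ne_of_mem_erase hj).symm) _ (hw j)) ?_
  intro x hx y hy hxy
  exact single_mul_single_of_ne (h := (Finset.ne_of_mem_erase hx)) ..

/-! ### Conjugates of elementary matrices of level `k²` -/

lemma exists_third (hι : 3 ≤ Fintype.card ι) (i j : ι) : ∃ l, l ≠ i ∧ l ≠ j := by
  have h : ({i, j} : Finset ι).card < (Finset.univ : Finset ι).card :=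
    lt_of_le_of_lt Finset.card_le_two (by rw [Finset.card_univ]; omega)
  obtain ⟨l, -, hl⟩ := Finset.exists_mem_notMem_of_card_lt_card h
  simp only [Finset.mem_insert, Finset.mem_singleton, not_or] at hl
  exact ⟨l, hl⟩

/-- The vector `u = v_j e_i - v_i e_j` is orthogonal to `v`, and `1 + k² c v uᵀ` lies in every
subgroup containing the elementary matrices of level `k`. -/
lemma HasElem.pair {k : ℤ} (hH : HasElem H k) (hι : 3 ≤ Fintype.card ι) (i j : ι) (hij : i ≠ j)
    (v : ι → ℤ) (c : ℤ) :
    InH H (1 + vecMulVec v ((k ^ 2 * c) • (Pi.single i (v j) - Pi.single j (v i)))) := by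
  -- Split `v = (v - v') + v'` with `v'` supported on `{i, j}`. The part `1 + k² c (v - v') uᵀ` is a
  -- product of elementary matrices; `1 + k² c v' uᵀ` is the commutator of `1 + k v' e_lᵀ` and
  -- `1 + k c e_l uᵀ`.
  obtain ⟨l, hli, hlj⟩ := exists_third hι i j
  set u : ι → ℤ := Pi.single i (v j) - Pi.single j (v i) with hu
  set v' : ι → ℤ := Pi.single i (v i) + Pi.single j (v j) with hv'
  have huv' : u ⬝ᵥ v' = 0 := by
    simp [hu, hv', hij, hij.symm]; ring
  have hvi : (v - v') i = 0 := by simp [hv', hij]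
  have hvj : (v - v') j = 0 := by simp [hv', hij.symm]
  have hul : u l = 0 := by simp [hu, hli, hlj]
  have hvl : v' l = 0 := by simp [hv', hli, hlj]
  have h1 : InH H (1 + vecMulVec ((k ^ 2 * c * v j) • (v - v')) (Pi.single i 1)) :=
    hH.col i _ (by simp [Pi.smul_apply, hvi]) fun a => ⟨k * c * v j * (v - v') a, by
      simp only [Pi.smul_apply, smul_eq_mul]; ring⟩
  have h2 : InH H (1 + vecMulVec ((-(k ^ 2 * c * v i)) • (v - v')) (Pi.single j 1)) :=
    hH.col j _ (by simp [Pi.smul_apply, hvj]) fun a => ⟨-(k * c * v i) * (v - v') a, by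
      simp only [Pi.smul_apply, smul_eq_mul]; ring⟩
  have h3 : InH H (1 + vecMulVec (k • v') (Pi.single l 1) *
      vecMulVec (Pi.single l 1) ((k * c) • u)) := by
    refine (hH.col l _ (by simp [hvl]) fun a => ⟨v' a, by simp⟩).one_add_mul
      (hH.row l _ (by simp [hul]) fun a => ⟨c * u a, by simp [mul_assoc]⟩) ?_ ?_ ?_
    · simp [vecMulVec_mul_vecMulVec, hvl]
    · simp [vecMulVec_mul_vecMulVec, hul]
    · rw [vecMulVec_mul_vecMulVec, smul_dotProduct, dotProduct_smul, huv']; simp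
  have h12 := h1.one_add_add h2 (by simp [vecMulVec_mul_vecMulVec, hvi])
  have e12 : vecMulVec ((k ^ 2 * c * v j) • (v - v')) (Pi.single i 1) +
      vecMulVec ((-(k ^ 2 * c * v i)) • (v - v')) (Pi.single j 1) =
      vecMulVec ((k ^ 2 * c) • (v - v')) u := by
    ext a b
    simp only [vecMulVec_apply, Matrix.add_apply, Pi.smul_apply, smul_eq_mul, hu, Pi.sub_apply,
      Pi.single_apply]
    split_ifs <;> ring
  rw [e12] at h12
  convert h12.one_add_add h3 (by
    rw [vecMulVec_mul_vecMulVec, vecMulVec_mul_vecMulVec, dotProduct_smul, huv']; simp) using 2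
  ext a b
  simp only [vecMulVec_mul_vecMulVec, vecMulVec_apply, Matrix.add_apply, Pi.smul_apply,
    smul_eq_mul, Pi.sub_apply, dotProduct_single, Pi.single_eq_same]
  ring

/-- For `v` unimodular, with `u ⬝ v = 1`, and `w ⬝ v = 0`, expanding
`w = ∑ w_i u_j (v_j e_i - v_i e_j)` writes `1 + k² c v wᵀ` as a product of matrices covered by
`HasElem.pair`. -/
lemma HasElem.rankOne {k : ℤ} (hH : HasElem H k) (hι : 3 ≤ Fintype.card ι) (u v w : ι → ℤ)
    (huv : u ⬝ᵥ v = 1) (hwv : w ⬝ᵥ v = 0) (c : ℤ) :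
    InH H (1 + vecMulVec v ((k ^ 2 * c) • w)) := by
  have e : vecMulVec v ((k ^ 2 * c) • w) = ∑ x : ι × ι, vecMulVec v
      ((k ^ 2 * (c * w x.1 * u x.2)) • (Pi.single x.1 (v x.2) - Pi.single x.2 (v x.1))) := by
    ext a b
    rw [Matrix.sum_apply, Fintype.sum_prod_type]
    simp only [vecMulVec_apply, Pi.smul_apply, smul_eq_mul, Pi.sub_apply, Pi.single_apply,
      mul_sub, Finset.sum_sub_distrib, mul_ite, mul_zero]
    rw [Finset.sum_comm]
    simp only [Finset.sum_ite_eq, Finset.mem_univ, if_true]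
    have h1 : ∑ x, v a * (k ^ 2 * (c * w b * u x) * v x) =
        v a * (k ^ 2 * (c * w b)) * (u ⬝ᵥ v) := by
      rw [dotProduct, Finset.mul_sum]; exact Finset.sum_congr rfl fun _ _ => by ring
    have h2 : ∑ x, v a * (k ^ 2 * (c * w x * u b) * v x) =
        v a * (k ^ 2 * (c * u b)) * (w ⬝ᵥ v) := by
      rw [dotProduct, Finset.mul_sum]; exact Finset.sum_congr rfl fun _ _ => by ring
    rw [h1, h2, huv, hwv]; ring
  rw [e]
  refine InH.one_add_sum _ _ (fun x _ => ?_) fun x _ y _ _ => ?_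
  · by_cases h : x.1 = x.2
    · rw [h, sub_self, smul_zero, vecMulVec_zero, add_zero]
      exact ⟨1, one_mem _, rfl⟩
    · exact hH.pair hι _ _ h v _
  · have : (Pi.single x.1 (v x.2) - Pi.single x.2 (v x.1)) ⬝ᵥ v = 0 := by
      simp [sub_dotProduct]; ring
    rw [vecMulVec_mul_vecMulVec, smul_dotProduct, this]
    simp

/-- Every `SL_ι(ℤ)`-conjugate of an elementary matrix of level `k²` lies in every subgroup
containing the elementary matrices of level `k`. -/
lemma HasElem.conj {k : ℤ} (hH : HasElem H k) (hι : 3 ≤ Fintype.card ι) (i j : ι) (hij : i ≠ j)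
    (c : ℤ) (x g : SpecialLinearGroup ι ℤ) (hx : x.1 = 1 + single i j (k ^ 2 * c)) :
    g * x * g⁻¹ ∈ H := by
  have hg : (g⁻¹).1 * g.1 = 1 := congrArg Subtype.val (inv_mul_cancel g)
  have hg' : g.1 * (g⁻¹).1 = 1 := congrArg Subtype.val (mul_inv_cancel g)
  apply InH.mem
  have key := hH.rankOne hι (Pi.single i 1 ᵥ* (g⁻¹).1) (g.1 *ᵥ Pi.single i 1)
    (Pi.single j 1 ᵥ* (g⁻¹).1)
    (by rw [← dotProduct_mulVec, mulVec_mulVec, hg, one_mulVec]; simp)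
    (by rw [← dotProduct_mulVec, mulVec_mulVec, hg, one_mulVec]; simp [hij]) c
  convert key using 1
  change g.1 * x.1 * (g⁻¹).1 = _
  rw [hx, mul_add, add_mul, mul_one, hg']
  congr 1
  rw [← smul_vecMul, ← vecMulVec_mul, ← mul_vecMulVec]
  congr 2
  ext a b
  simp only [single_apply, vecMulVec_apply, Pi.smul_apply, Pi.single_apply, smul_eq_mul]
  grind

/-! ### Generation of `SL_n(ℤ)` by elementary matrices -/

/-- The columns of `g` with index in `S` are those of the identity matrix. -/
def FixCols (S : Finset ι) (g : SpecialLinearGroup ι ℤ) : Prop :=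
  ∀ j ∈ S, ∀ a, g.1 a j = (1 : Matrix ι ι ℤ) a j

/-- If `g` fixes `e_j` for `j ∈ S`, any other column of `g` is already unimodular outside `S`: the
coefficients are a row of `g⁻¹`, which vanishes on `S`. -/
lemma FixCols.bezout {S : Finset ι} {g : SpecialLinearGroup ι ℤ} (hg : FixCols S g) (i : ι)
    (hi : i ∉ S) : ∃ w : ι → ℤ, ∑ l ∈ Sᶜ, w l * g.1 l i = 1 := by
  have h1 : (g⁻¹).1 * g.1 = 1 := congrArg Subtype.val (inv_mul_cancel g)
  refine ⟨(g⁻¹).1 i, ?_⟩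
  have hz : ∀ j ∈ S, (g⁻¹).1 i j = 0 := by
    intro j hj
    have h2 : ((g⁻¹).1 * g.1) i j = 0 := by
      rw [h1, one_apply_ne]; rintro rfl; exact hi hj
    rw [mul_apply, Finset.sum_congr rfl (fun a _ => by rw [hg j hj a])] at h2
    simpa [one_apply] using h2
  have h3 : ((g⁻¹).1 * g.1) i i = 1 := by rw [h1, one_apply_eq]
  rw [mul_apply, ← Finset.sum_add_sum_compl S,
    Finset.sum_eq_zero (fun j hj => by rw [hz j hj, zero_mul]), zero_add] at h3
  exact h3

/-- Adding `c` times row `b ∉ S` to row `a` is left multiplication by an element of `H` and does not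
affect the columns in `S`. -/
lemma FixCols.rowOp (hH : HasElem H 1) {S : Finset ι} {g : SpecialLinearGroup ι ℤ}
    (hg : FixCols S g) (a b : ι) (hab : a ≠ b) (hb : b ∉ S) (c : ℤ) :
    ∃ h ∈ H, FixCols S (h * g) ∧ (∀ j, (h * g).1 a j = g.1 a j + c * g.1 b j) ∧
      ∀ l, l ≠ a → ∀ j, (h * g).1 l j = g.1 l j := by
  obtain ⟨h, hh, e⟩ := hH a b hab c (one_dvd c)
  have e1 : ∀ l j, (h * g).1 l j = g.1 l j + if l = a then c * g.1 b j else 0 := by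
    intro l j
    change (h.1 * g.1) l j = _
    rw [e, add_mul, one_mul, Matrix.add_apply]
    congr 1
    split_ifs with hl
    · subst hl; simp
    · simp [hl]
  refine ⟨h, hh, fun j hj l => ?_, fun j => by simp [e1], fun l hl j => by simp [e1, hl]⟩
  rw [e1, hg j hj l, hg j hj b, one_apply_ne (i := b)]
  · simp
  · rintro rfl; exact hb hj

/-- The Euclidean algorithm on column `i`, using rows outside `S` only; the induction is on the sum
`m` of the absolute values of the entries involved. The second index `i'` outside `S` is needed
to change the sign of a final entry `-1`. -/
lemma FixCols.exists_diag_one (hH : HasElem H 1) {S : Finset ι} (i i' : ι) (hi : i ∉ S)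
    (hi' : i' ∉ S) (hii' : i ≠ i') (m : ℕ) : ∀ (g : SpecialLinearGroup ι ℤ),
    FixCols S g → ∑ l ∈ Sᶜ, (g.1 l i).natAbs = m →
    ∃ h ∈ H, FixCols S (h * g) ∧ (h * g).1 i i = 1 := by
  -- A unit entry off the diagonal can be used to produce a `1` on the diagonal.
  have fin : ∀ (g : SpecialLinearGroup ι ℤ), FixCols S g → ∀ l ∉ S, l ≠ i → IsUnit (g.1 l i) →
      ∃ h ∈ H, FixCols S (h * g) ∧ (h * g).1 i i = 1 := by
    intro g hg l hl hli hu
    obtain ⟨h, hh, h1, h2, -⟩ := hg.rowOp hH i l hli.symm hl ((1 - g.1 i i) * g.1 l i)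
    refine ⟨h, hh, h1, ?_⟩
    rw [h2, mul_assoc, Int.isUnit_mul_self hu]; ring
  induction m using Nat.strong_induction_on with
  | _ m ih =>
  intro g hg hm
  by_cases h2 : ∃ a b, a ∉ S ∧ b ∉ S ∧ a ≠ b ∧ g.1 b i ≠ 0 ∧ (g.1 b i).natAbs ≤ (g.1 a i).natAbs
  · obtain ⟨a, b, ha, hb, hab, hb0, hle⟩ := h2
    obtain ⟨h, hh, f1, f2, f3⟩ := hg.rowOp hH a b hab hb (-(g.1 a i / g.1 b i))
    have hlt : ((h * g).1 a i).natAbs < (g.1 a i).natAbs := by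
      have : (h * g).1 a i = g.1 a i % g.1 b i := by
        rw [f2, Int.emod_def]; ring
      rw [this]
      refine lt_of_lt_of_le ?_ hle
      have hlt := Int.emod_lt_abs (g.1 a i) hb0
      rw [Int.abs_eq_natAbs] at hlt
      have := Int.emod_nonneg (g.1 a i) hb0
      omega
    have hsum : ∑ l ∈ Sᶜ, ((h * g).1 l i).natAbs < m := by
      rw [← hm]
      refine Finset.sum_lt_sum (fun l _ => ?_) ⟨a, by simpa using ha, hlt⟩
      by_cases hla : l = a
      · subst hla; exact hlt.le
      · rw [f3 l hla]
    obtain ⟨h', hh', r1, r2⟩ := ih _ hsum (h * g) f1 rfl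
    exact ⟨h' * h, mul_mem hh' hh, by rwa [mul_assoc], by rwa [mul_assoc]⟩
  · push Not at h2
    obtain ⟨w, hw⟩ := hg.bezout i hi
    obtain ⟨l, hl, hl0⟩ : ∃ l ∈ Sᶜ, w l * g.1 l i ≠ 0 :=
      Finset.exists_ne_zero_of_sum_ne_zero (by rw [hw]; exact one_ne_zero)
    have hlS : l ∉ S := by simpa using hl
    have hgl : g.1 l i ≠ 0 := right_ne_zero_of_mul hl0
    have hz : ∀ a ∉ S, a ≠ l → g.1 a i = 0 := by
      intro a ha hal
      by_contra h0
      have p1 := h2 a l ha hlS hal hgl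
      have p2 := h2 l a hlS ha hal.symm h0
      omega
    rw [Finset.sum_eq_single_of_mem l hl
      (fun a ha hal => by rw [hz a (by simpa using ha) hal, mul_zero])] at hw
    have hu : IsUnit (g.1 l i) := IsUnit.of_mul_eq_one_right _ hw
    by_cases hli : l = i
    · subst hli
      obtain ⟨h, hh, f1, f2, f3⟩ := hg.rowOp hH i' l hii'.symm hi 1
      obtain ⟨h', hh', r1, r2⟩ := fin (h * g) f1 i' hi' hii'.symm (by
        rw [f2, hz i' hi' hii'.symm]; simpa using hu)
      exact ⟨h' * h, mul_mem hh' hh, by rwa [mul_assoc], by rwa [mul_assoc]⟩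
    · exact fin g hg l hlS hli hu

/-- `SL_ι(ℤ)` is generated by elementary matrices: the columns are turned into those of the identity
one after the other. -/
lemma HasElem.eq_top (hH : HasElem H 1) : H = ⊤ := by
  suffices ∀ (m : ℕ) (S : Finset ι), Sᶜ.card = m → ∀ g, FixCols S g → g ∈ H from
    eq_top_iff.2 fun g _ => this _ ∅ rfl g (fun j hj => by simp at hj)
  intro m
  induction m with
  | zero =>
    intro S hS g hg
    have : g = 1 := by
      ext a b
      rw [Finset.card_eq_zero] at hS
      have hb : b ∈ S := by
        by_contra hb
        simpa [hS] using Finset.mem_compl.2 hb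
      exact hg b hb a
    rw [this]; exact one_mem _
  | succ m ih =>
    intro S hS g hg
    obtain ⟨i, hi⟩ : Sᶜ.Nonempty := Finset.card_pos.1 (by omega)
    have hiS : i ∉ S := by simpa using hi
    have hdiag : ∃ h ∈ H, FixCols S (h * g) ∧ (h * g).1 i i = 1 := by
      by_cases hex : ∃ i', i' ∉ S ∧ i ≠ i'
      · obtain ⟨i', hi', hne⟩ := hex
        exact FixCols.exists_diag_one hH i i' hiS hi' hne _ g hg rfl
      · push Not at hex
        refine ⟨1, one_mem _, by rwa [one_mul], ?_⟩
        rw [one_mul]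
        -- All columns but the `i`-th are trivial, so `g i i = det g = 1`.
        have e : g.1 = (1 : Matrix ι ι ℤ).updateCol i (fun a => g.1 a i) := by
          ext a b
          by_cases hb : b = i
          · subst hb; simp
          · rw [updateCol_ne hb]
            refine hg b ?_ a
            by_contra hbS
            exact hb (hex b hbS).symm
        have hd := g.2
        rw [e, ← cramer_apply, cramer_one] at hd
        exact hd
    obtain ⟨h, hh, f1, f2⟩ := hdiag
    set g' := h * g with hg'
    obtain ⟨h', hh', e⟩ := hH.col i (fun a => (1 : Matrix ι ι ℤ) a i - g'.1 a i) (by simp [f2])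
      (fun _ => one_dvd _)
    have hmem : h' * g' ∈ H := by
      refine ih (insert i S) ?_ _ ?_
      · rw [Finset.compl_insert, Finset.card_erase_of_mem hi, hS]; rfl
      · have key : ∀ a j, (h' * g').1 a j =
            g'.1 a j + ((1 : Matrix ι ι ℤ) a i - g'.1 a i) * g'.1 i j := by
          intro a j
          change (h'.1 * g'.1) a j = _
          rw [e, add_mul, one_mul, Matrix.add_apply, vecMulVec_mul, vecMulVec_apply]
          simp
        intro j hj a
        rw [key]
        rcases Finset.mem_insert.1 hj with rfl | hj
        · rw [f2]; ring
        · rw [f1 j hj a, f1 j hj i, one_apply_ne (i := i)]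
          · simp
          · rintro rfl; exact hiS hj
    have : g = h⁻¹ * (h'⁻¹ * (h' * g')) := by rw [hg']; group
    rw [this]
    exact mul_mem (inv_mem hh) (mul_mem (inv_mem hh') hmem)

/-! ### Stable range of `ℤ` -/

/-- If `b`, `a` and `d` have no common prime factor and `d ≠ 0`, some `b + t a` is prime to `d`:
take for `t` the product of the primes dividing `d` but not `b`. -/
lemma exists_isCoprime_add_mul (b a d x y : ℤ) (hd : d ≠ 0) (h : x * b + y * a + d = 1) :
    ∃ t, IsCoprime (b + t * a) d := by
  set T := d.natAbs.primeFactors.filter (fun p : ℕ => ¬ (p : ℤ) ∣ b) with hT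
  refine ⟨∏ p ∈ T, (p : ℤ), ?_⟩
  rw [Int.isCoprime_iff_gcd_eq_one]
  by_contra hne
  obtain ⟨p, hp, hpd⟩ := Nat.exists_prime_and_dvd hne
  have hp1 : (p : ℤ) ∣ b + (∏ p ∈ T, (p : ℤ)) * a :=
    (Int.natCast_dvd_natCast.2 hpd).trans (Int.gcd_dvd_left ..)
  have hp2 : (p : ℤ) ∣ d := (Int.natCast_dvd_natCast.2 hpd).trans (Int.gcd_dvd_right ..)
  have hpp : Prime (p : ℤ) := Nat.prime_iff_prime_int.1 hp
  by_cases hb : (p : ℤ) ∣ b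
  · rcases hpp.dvd_or_dvd ((dvd_add_right hb).1 hp1) with h1 | h1
    · obtain ⟨r, hr, hpr⟩ := (hpp.dvd_finsetProd_iff _).1 h1
      rw [hT, Finset.mem_filter] at hr
      have hrp := (Nat.prime_dvd_prime_iff_eq hp (Nat.prime_of_mem_primeFactors hr.1)).1
        (Int.natCast_dvd_natCast.1 hpr)
      exact hr.2 (hrp ▸ hb)
    · refine hpp.not_dvd_one ?_
      rw [← h]
      exact dvd_add (dvd_add (hb.mul_left _) (h1.mul_left _)) hp2
  · refine hb ((dvd_add_left (Dvd.dvd.mul_right ?_ a)).1 hp1)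
    refine Finset.dvd_prod_of_mem (fun p : ℕ => (p : ℤ)) ?_
    rw [hT, Finset.mem_filter]
    exact ⟨Nat.mem_primeFactors.2 ⟨hp, Int.natCast_dvd.1 hp2, by simpa using hd⟩, hb⟩

/-- Stable range: if `a` and the `b_i`, `i ≠ n`, generate the unit ideal and there are at least two
indices `i ≠ n`, then adding multiples of `a` to the `b_i` makes them unimodular by themselves. -/
lemma exists_shift (n i₁ i₂ : ι) (h1 : i₁ ≠ n) (h2 : i₂ ≠ n) (h12 : i₁ ≠ i₂) (b x : ι → ℤ)
    (a y : ℤ) (hx : x n = 0) (h : x ⬝ᵥ b + y * a = 1) :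
    ∃ t s : ι → ℤ, t n = 0 ∧ s n = 0 ∧ s ⬝ᵥ (b + a • t) = 1 := by
  set x' : ι → ℤ := x - Pi.single i₁ (x i₁) with hx'
  have hd : x' ⬝ᵥ b = x ⬝ᵥ b - x i₁ * b i₁ := by simp [hx', sub_dotProduct]
  by_cases hd0 : x' ⬝ᵥ b = 0
  · refine ⟨Pi.single i₂ ((1 - b i₂) * y), Pi.single i₂ 1 + Pi.single i₁ ((1 - b i₂) * x i₁),
      by simp [h2.symm], by simp [h1.symm, h2.symm], ?_⟩
    simp only [add_dotProduct, single_dotProduct, Pi.add_apply, Pi.smul_apply, smul_eq_mul,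
      Pi.single_eq_same, Pi.single_eq_of_ne h12]
    linear_combination (1 - b i₂) * h + (1 - b i₂) * (hd - hd0)
  · obtain ⟨t, P, Q, ht⟩ := exists_isCoprime_add_mul (b i₁) a (x' ⬝ᵥ b) (x i₁) y hd0
      (by rw [hd]; linear_combination h)
    refine ⟨Pi.single i₁ t, Pi.single i₁ P + Q • x', by simp [h1.symm],
      by simp [hx', h1.symm, hx], ?_⟩
    have hx1 : x' i₁ = 0 := by simp [hx']
    simp only [add_dotProduct, single_dotProduct, Pi.add_apply, Pi.smul_apply, smul_eq_mul,
      Pi.single_eq_same, smul_dotProduct, dotProduct_add, dotProduct_smul, dotProduct_single, hx1]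
    linear_combination ht

/-! ### The principal congruence subgroup is central modulo `N` -/

lemma hasElem_top : HasElem (⊤ : Subgroup (SpecialLinearGroup ι ℤ)) 1 :=
  fun _ _ hij c _ => ⟨SpecialLinearGroup.transvection hij c, trivial, rfl⟩

/-- The principal congruence subgroup of level `q`, as the kernel of reduction modulo `q`. -/
def principalCongr (ι : Type*) [Fintype ι] [DecidableEq ι] (q : ℕ) :
    Subgroup (SpecialLinearGroup ι ℤ) :=
  (SpecialLinearGroup.map (n := ι) (Int.castRingHom (ZMod q))).ker

instance {q : ℕ} : (principalCongr ι q).Normal := by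
  unfold principalCongr; infer_instance

lemma mem_principalCongr {q : ℕ} {g : SpecialLinearGroup ι ℤ} :
    g ∈ principalCongr ι q ↔ ∀ a b, (q : ℤ) ∣ (g.1 - 1) a b := by
  rw [principalCongr, MonoidHom.mem_ker]
  refine (Matrix.SpecialLinearGroup.ext_iff _ _).trans ?_
  refine forall₂_congr fun a b => ?_
  rw [← ZMod.intCast_zmod_eq_zero_iff_dvd, Matrix.sub_apply, Int.cast_sub, sub_eq_zero]
  change ((g.1 a b : ℤ) : ZMod q) = (1 : Matrix ι ι (ZMod q)) a b ↔ _
  rw [one_apply, one_apply]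
  split_ifs <;> simp

/-- The subgroup of elements whose image in `SL_ι(ℤ) / N` is central. -/
def centralMod (N : Subgroup (SpecialLinearGroup ι ℤ)) [N.Normal] :
    Subgroup (SpecialLinearGroup ι ℤ) :=
  (Subgroup.center (SpecialLinearGroup ι ℤ ⧸ N)).comap (QuotientGroup.mk' N)

instance [N.Normal] : (centralMod N).Normal := by
  unfold centralMod; infer_instance

lemma le_centralMod [N.Normal] : N ≤ centralMod N := by
  intro x hx
  have h : QuotientGroup.mk' N x = 1 := (QuotientGroup.eq_one_iff (N := N) x).2 hx
  rw [centralMod, Subgroup.mem_comap, h]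
  exact one_mem _

/-- If `g` fixes the `n`-th basis vector and the `n`-th coordinate, then conjugation by `g` maps
`1 + v e_nᵀ` to `1 + (g v) e_nᵀ`, which differs from it by an element of `N`; likewise for
`1 + e_n wᵀ`. These matrices generate `SL_ι(ℤ)`. -/
lemma mem_centralMod_of_block [N.Normal] {q : ℕ} (hN : HasElem N q) (n : ι)
    (g : SpecialLinearGroup ι ℤ) (hg : g ∈ principalCongr ι q)
    (hc : g.1 *ᵥ Pi.single n 1 = Pi.single n 1)
    (hr : Pi.single n 1 ᵥ* g.1 = Pi.single n 1) : g ∈ centralMod N := by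
  rw [mem_principalCongr] at hg
  -- `C` is the group of elements commuting with `g` modulo `N`.
  set C := (Subgroup.centralizer {(QuotientGroup.mk' N g)}).comap (QuotientGroup.mk' N) with hC
  have memC : ∀ x, x ∈ C ↔ (QuotientGroup.mk' N) (x * g) = (QuotientGroup.mk' N) (g * x) := by
    intro x
    rw [hC, Subgroup.mem_comap, Subgroup.mem_centralizer_singleton_iff, map_mul, map_mul]
  have mkN : ∀ y ∈ N, QuotientGroup.mk' N y = 1 := fun y hy =>
    (QuotientGroup.eq_one_iff (N := N) y).2 hy
  have hcol : ∀ v : ι → ℤ, v n = 0 → InH C (1 + vecMulVec v (Pi.single n 1)) := by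
    intro v hv
    obtain ⟨x, -, ex⟩ := (hasElem_top (ι := ι)).col n v hv
      fun _ => one_dvd _
    have hn0 : ((g.1 - 1) *ᵥ v) n = 0 := by
      have : (Pi.single n 1 ᵥ* g.1) ⬝ᵥ v = Pi.single n 1 ⬝ᵥ v := by rw [hr]
      rw [← dotProduct_mulVec] at this
      simp only [single_dotProduct, one_mul] at this
      rw [sub_mulVec, one_mulVec, Pi.sub_apply, this, sub_self]
    obtain ⟨y, hy, ey⟩ := hN.col n ((g.1 - 1) *ᵥ v) hn0
      (fun a => Finset.dvd_sum fun b _ => (hg a b).mul_right _)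
    refine ⟨x, (memC x).2 ?_, ex⟩
    have : g * x = y * (x * g) := by
      apply Subtype.ext
      change g.1 * x.1 = y.1 * (x.1 * g.1)
      have exg : x.1 * g.1 = g.1 + vecMulVec v (Pi.single n 1) := by
        rw [ex, add_mul, one_mul, vecMulVec_mul, hr]
      rw [exg, ex, ey, mul_add, mul_one, mul_vecMulVec, add_mul, one_mul, mul_add,
        vecMulVec_mul, hr, vecMulVec_mul_vecMulVec, single_dotProduct, hv, mul_zero, zero_smul,
        vecMulVec_zero, add_zero, sub_mulVec, one_mulVec, sub_vecMulVec]
      abel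
    rw [this, map_mul _ y, mkN y hy, one_mul]
  have hrow : ∀ w : ι → ℤ, w n = 0 → InH C (1 + vecMulVec (Pi.single n 1) w) := by
    intro w hw
    obtain ⟨x, -, ex⟩ := (hasElem_top (ι := ι)).row n w hw
      fun _ => one_dvd _
    have hn0 : (w ᵥ* (g.1 - 1)) n = 0 := by
      have : w ⬝ᵥ (g.1 *ᵥ Pi.single n 1) = w ⬝ᵥ Pi.single n 1 := by rw [hc]
      rw [dotProduct_mulVec] at this
      simp only [dotProduct_single, mul_one] at this
      rw [vecMul_sub, vecMul_one, Pi.sub_apply, this, sub_self]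
    obtain ⟨y, hy, ey⟩ := hN.row n (w ᵥ* (g.1 - 1)) hn0
      (fun a => Finset.dvd_sum fun b _ => (hg b a).mul_left _)
    refine ⟨x, (memC x).2 ?_, ex⟩
    have : x * g = g * x * y := by
      apply Subtype.ext
      change x.1 * g.1 = g.1 * x.1 * y.1
      rw [ex, ey, mul_add g.1, add_mul 1, mul_one, one_mul, mul_vecMulVec, vecMulVec_mul, hc,
        add_mul, mul_add, mul_add, mul_one, mul_one, mul_vecMulVec, hc, vecMulVec_mul_vecMulVec,
        dotProduct_single, hw, zero_mul, zero_smul, vecMulVec_zero, add_zero, vecMul_sub,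
        vecMul_one, vecMulVec_sub]
      abel
    rw [this, map_mul _ _ y, mkN y hy, mul_one]
  have hsingle : ∀ i j : ι, ∀ c : ℤ, single i j c = vecMulVec (Pi.single i c) (Pi.single j 1) := by
    intro i j c
    ext a b
    simp only [single_apply, vecMulVec_apply, Pi.single_apply]
    grind
  have hsingle' : ∀ i j : ι, ∀ c : ℤ, single i j c = vecMulVec (Pi.single i 1) (Pi.single j c) := by
    intro i j c
    ext a b
    simp only [single_apply, vecMulVec_apply, Pi.single_apply]
    grind
  have hCtop : C = ⊤ := by
    refine HasElem.eq_top fun i j hij c _ => ?_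
    by_cases hj : j = n
    · subst hj
      rw [hsingle]
      exact hcol _ (by simp [hij.symm])
    by_cases hi : i = n
    · subst hi
      rw [hsingle']
      exact hrow _ (by simp [hij])
    have key := (hcol (Pi.single i c) (by simp [Ne.symm hi])).one_add_mul
      (hrow (Pi.single j 1) (by simp [Ne.symm hj]))
      (by rw [vecMulVec_mul_vecMulVec]; simp [Ne.symm hi])
      (by rw [vecMulVec_mul_vecMulVec]; simp [hj])
      (by rw [vecMulVec_mul_vecMulVec]; simp [hij.symm])
    rw [vecMulVec_mul_vecMulVec] at key
    rw [hsingle]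
    simpa using key
  rw [centralMod, Subgroup.mem_comap, Subgroup.mem_center_iff]
  intro z
  obtain ⟨x, rfl⟩ := QuotientGroup.mk'_surjective N z
  have hx : x ∈ C := hCtop ▸ Subgroup.mem_top x
  rw [← map_mul, ← map_mul]
  exact (memC x).1 hx

/-- Once the `n`-th column of `g` is trivial, right multiplication by an element of `N` clears the
`n`-th row. -/
lemma mem_centralMod_of_col [N.Normal] {q : ℕ} (hN : HasElem N q) (n : ι)
    (g : SpecialLinearGroup ι ℤ) (hg : g ∈ principalCongr ι q)
    (hc : g.1 *ᵥ Pi.single n 1 = Pi.single n 1) :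
    g ∈ centralMod N := by
  set r : ι → ℤ := Pi.single n 1 ᵥ* g.1 - Pi.single n 1 with hr
  have hrn : r n = 0 := by
    have := congrFun hc n
    simp at this
    simp [hr, this]
  have hrq : ∀ j, (q : ℤ) ∣ (-r) j := by
    intro j
    have := (mem_principalCongr.1 hg) n j
    have e : r j = (g.1 - 1) n j := by simp [hr, one_apply, Pi.single_apply, eq_comm]
    rw [Pi.neg_apply, e]
    exact (dvd_neg).2 this
  obtain ⟨h, hh, e⟩ := hN.row n (-r) (by simp [hrn]) hrq
  have hhΓ : h ∈ principalCongr ι q := by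
    rw [mem_principalCongr]
    intro a b
    rw [e, add_sub_cancel_left, vecMulVec_apply]
    exact (hrq b).mul_left _
  have key : g * h ∈ centralMod N := by
    refine mem_centralMod_of_block hN n _ (mul_mem hg hhΓ) ?_ ?_
    · change (g.1 * h.1) *ᵥ _ = _
      rw [e, ← mulVec_mulVec, add_mulVec, one_mulVec, vecMulVec_mulVec, neg_dotProduct,
        dotProduct_single, hrn]
      simpa using hc
    · change _ ᵥ* (g.1 * h.1) = _
      rw [e, mul_add, mul_one, mul_vecMulVec, hc, vecMul_add, vecMul_vecMulVec]
      simp [hr]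
  exact (Subgroup.mul_mem_cancel_right _ (le_centralMod hh)).1 key

/-- With `b` as `(n-th column) / q` off the diagonal and `a = g n n`, multiplication by
`h = 1 + q t e_nᵀ ∈ N` makes `b' = b + a t` unimodular. Since `a ≡ 1` modulo `q`, conjugation by a
suitable `u = 1 + e_n s'ᵀ` then makes the entry `(n, n)` equal to `1`, and a further element
`h'` of `N` clears the rest of the column. -/
lemma principalCongr_le_centralMod [N.Normal] (hι : 3 ≤ Fintype.card ι) {q : ℕ} (hN : HasElem N q) :
    principalCongr ι q ≤ centralMod N := by
  intro g hg
  have : Nonempty ι := Fintype.card_pos_iff.1 (by omega)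
  obtain ⟨n⟩ := this
  obtain ⟨i₁, h1, -⟩ := exists_third hι n n
  obtain ⟨i₂, h2, h12⟩ := exists_third hι n i₁
  choose B hB using fun a => mem_principalCongr.1 hg a n
  -- Off the `n`-th entry, the `n`-th column of `g` is `q b`.
  set b : ι → ℤ := fun a => if a = n then 0 else B a with hb
  have hga : ∀ a, a ≠ n → g.1 a n = q * b a := by
    intro a ha
    have := hB a
    rw [Matrix.sub_apply, one_apply_ne ha, sub_zero] at this
    simp [hb, ha, this]
  have hgn : g.1 n n = 1 + q * B n := by
    have := hB n
    rw [Matrix.sub_apply, one_apply_eq] at this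
    linarith
  have hcol : g.1 *ᵥ Pi.single n 1 = (q : ℤ) • b + Pi.single n (g.1 n n) := by
    ext a
    by_cases ha : a = n
    · subst ha; simp [hb]
    · simp [ha, hga a ha]
  have hbez : ∃ (x : ι → ℤ) (y : ℤ), x n = 0 ∧ x ⬝ᵥ b + y * g.1 n n = 1 := by
    have hi : (g⁻¹).1 * g.1 = 1 := congrArg Subtype.val (inv_mul_cancel g)
    set z := (g⁻¹).1 n with hz
    refine ⟨(q : ℤ) • (z - Pi.single n (z n)), z n, by simp, ?_⟩
    have e : z ⬝ᵥ (g.1 *ᵥ Pi.single n 1) = 1 := by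
      have : ((g⁻¹).1 * g.1) n n = 1 := by rw [hi, one_apply_eq]
      rw [mul_apply] at this
      rw [mulVec_single_one]
      exact this
    have hbn : b n = 0 := by simp [hb]
    rw [hcol, dotProduct_add, dotProduct_smul, dotProduct_single] at e
    rw [smul_dotProduct, sub_dotProduct, single_dotProduct, hbn, mul_zero, sub_zero]
    exact e
  obtain ⟨x, y, hx, hxy⟩ := hbez
  obtain ⟨t, s, ht, hs, hst⟩ := exists_shift n i₁ i₂ h1 h2 (Ne.symm h12) b x _ y hx hxy
  set a := g.1 n n with ha
  set b' : ι → ℤ := b + a • t with hb'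
  have hb'n : b' n = 0 := by simp [hb', hb, ht]
  set s' : ι → ℤ := (-B n) • s with hs'
  have hs'n : s' n = 0 := by simp [hs', hs]
  have hs'b : s' ⬝ᵥ b' = -B n := by rw [hs', smul_dotProduct, hst, smul_eq_mul, mul_one]
  have hΓ : ∀ (v : ι → ℤ) (h : SpecialLinearGroup ι ℤ), (∀ i, (q : ℤ) ∣ v i) →
      h.1 = 1 + vecMulVec v (Pi.single n 1) → h ∈ principalCongr ι q := by
    intro v h hv e
    rw [mem_principalCongr]
    intro i j
    rw [e, add_sub_cancel_left, vecMulVec_apply]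
    exact (hv i).mul_right _
  have hdt : ∀ i, (q : ℤ) ∣ ((q : ℤ) • t) i := fun i => ⟨t i, rfl⟩
  have hdb : ∀ i, (q : ℤ) ∣ (-((q : ℤ) • b')) i := fun i => (dvd_neg).2 ⟨b' i, rfl⟩
  obtain ⟨h, hh, eh⟩ := hN.col n ((q : ℤ) • t) (by simp [ht]) hdt
  obtain ⟨h', hh', eh'⟩ := hN.col n (-((q : ℤ) • b')) (by simp [hb'n]) hdb
  obtain ⟨u, -, eu⟩ := (hasElem_top (ι := ι)).row n s' hs'n fun _ => one_dvd _
  have hu1 : u.1 *ᵥ Pi.single n 1 = Pi.single n 1 := by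
    rw [eu, add_mulVec, one_mulVec, vecMulVec_mulVec, dotProduct_single, hs'n]
    simp
  have hu2 : (u⁻¹).1 *ᵥ Pi.single n 1 = Pi.single n 1 := by
    have hi : (u⁻¹).1 * u.1 = 1 := congrArg Subtype.val (inv_mul_cancel u)
    conv_lhs => rw [← hu1]
    rw [mulVec_mulVec, hi, one_mulVec]
  have hbn : b n = 0 := by simp [hb]
  have c1 : (h.1 * g.1) *ᵥ Pi.single n 1 = (q : ℤ) • b' + Pi.single n a := by
    rw [← mulVec_mulVec, hcol, eh, add_mulVec, one_mulVec, vecMulVec_mulVec, single_dotProduct]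
    ext i
    simp [hb', hbn]
    ring
  have c2 : u.1 *ᵥ ((q : ℤ) • b' + Pi.single n a) = (q : ℤ) • b' + Pi.single n 1 := by
    rw [eu, add_mulVec, one_mulVec, vecMulVec_mulVec, dotProduct_add, dotProduct_smul, hs'b,
      dotProduct_single, hs'n, hgn]
    ext i
    by_cases hin : i = n
    · subst hin; simp; ring
    · simp [hin]
  have c3 : h'.1 *ᵥ ((q : ℤ) • b' + Pi.single n 1) = Pi.single n 1 := by
    rw [eh', add_mulVec, one_mulVec, vecMulVec_mulVec, single_dotProduct, Pi.add_apply,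
      Pi.smul_apply, hb'n]
    ext i
    simp
  have key : h' * (u * (h * g) * u⁻¹) ∈ centralMod N := by
    refine mem_centralMod_of_col hN n _ (mul_mem (hΓ _ _ hdb eh')
      (Subgroup.Normal.conj_mem inferInstance _ (mul_mem (hΓ _ _ hdt eh) hg) u)) ?_
    change (h'.1 * (u.1 * (h.1 * g.1) * (u⁻¹).1)) *ᵥ _ = _
    rw [← mulVec_mulVec, ← mulVec_mulVec, hu2, ← mulVec_mulVec, c1, c2, c3]
  have key2 := (Subgroup.mul_mem_cancel_left _ (le_centralMod hh')).1 key
  have key3 := Subgroup.Normal.conj_mem inferInstance _ key2 u⁻¹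
  have e3 : u⁻¹ * (u * (h * g) * u⁻¹) * u⁻¹⁻¹ = h * g := by group
  rw [e3] at key3
  exact (Subgroup.mul_mem_cancel_left _ (le_centralMod hh)).1 key3

/-! ### Finite index -/

/-- A consequence of Schur's theorem: a perfect group whose centre has finite index is finite. -/
lemma finite_of_perfect_of_center {Q : Type*} [Group Q] [(Subgroup.center Q).FiniteIndex]
    (hQ : commutator Q = ⊤) : Finite Q := by
  have hfin : (commutatorSet Q).Finite := by
    have hf : ∀ (z w : Subgroup.center Q) (a b : Q), ⁅a * z, b * w⁆ = ⁅a, b⁆ := by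
      intro z w a b
      have hz := fun x => (Subgroup.mem_center_iff.1 z.2 x)
      have hw := fun x => (Subgroup.mem_center_iff.1 w.2 x)
      simp only [commutatorElement_def, _root_.mul_inv_rev]
      calc a * z * (b * w) * ((z : Q)⁻¹ * a⁻¹) * ((w : Q)⁻¹ * b⁻¹)
          = a * (z * (b * w)) * (z : Q)⁻¹ * a⁻¹ * (w : Q)⁻¹ * b⁻¹ := by group
        _ = a * b * (w * a⁻¹) * (w : Q)⁻¹ * b⁻¹ := by rw [← hz]; group
        _ = a * b * a⁻¹ * b⁻¹ := by rw [← hw]; group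
    refine (Set.finite_range (fun p : (Q ⧸ Subgroup.center Q) × (Q ⧸ Subgroup.center Q) =>
      ⁅p.1.out, p.2.out⁆)).subset ?_
    rintro _ ⟨a, b, rfl⟩
    refine ⟨((a : Q ⧸ Subgroup.center Q), (b : Q ⧸ Subgroup.center Q)), ?_⟩
    obtain ⟨z, hz⟩ := QuotientGroup.mk_out_eq_mul (Subgroup.center Q) a
    obtain ⟨w, hw⟩ := QuotientGroup.mk_out_eq_mul (Subgroup.center Q) b
    simp only [hz, hw, hf]
  have : Finite (commutatorSet Q) := hfin
  have h : Finite (commutator Q) := inferInstance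
  rw [hQ] at h
  exact Finite.of_equiv _ Subgroup.topEquiv.toEquiv


lemma commutator_eq_top (hι : 3 ≤ Fintype.card ι) :
    commutator (SpecialLinearGroup ι ℤ) = ⊤ := by
  refine HasElem.eq_top fun i j hij c _ => ?_
  obtain ⟨l, hli, hlj⟩ := exists_third hι i j
  refine ⟨⁅SpecialLinearGroup.transvection hli.symm c, SpecialLinearGroup.transvection hlj 1⁆,
    Subgroup.commutator_mem_commutator trivial trivial, ?_⟩
  rw [coe_commutator (A := single i l c) (B := single l j 1) rfl rfl] <;>
  simp [hli, hlj.symm, hij.symm]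

lemma HasElem.finiteIndex_of_normal {N : Subgroup (SpecialLinearGroup ι ℤ)} [N.Normal]
    (hι : 3 ≤ Fintype.card ι) {q : ℕ} (hq : q ≠ 0) (hN : HasElem N q) : N.FiniteIndex := by
  have : NeZero q := ⟨hq⟩
  have hΓ : (principalCongr ι q).FiniteIndex := by
    unfold principalCongr
    infer_instance
  have hZ : (centralMod N).FiniteIndex :=
    Subgroup.finiteIndex_of_le (principalCongr_le_centralMod hι hN)
  have hc : (Subgroup.center (SpecialLinearGroup ι ℤ ⧸ N)).FiniteIndex := by
    refine ⟨?_⟩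
    rw [← Subgroup.index_comap_of_surjective _ (QuotientGroup.mk'_surjective N)]
    exact hZ.index_ne_zero
  have : Finite (SpecialLinearGroup ι ℤ ⧸ N) := by
    refine finite_of_perfect_of_center ?_
    rw [commutator_def, ← Subgroup.map_top_of_surjective _ (QuotientGroup.mk'_surjective N),
      ← Subgroup.map_commutator, ← commutator_def, commutator_eq_top hι]
  exact Subgroup.finiteIndex_of_finite_quotient

lemma HasElem.finiteIndex {H : Subgroup (SpecialLinearGroup ι ℤ)}
    (hι : 3 ≤ Fintype.card ι) {k : ℕ} (hk : k ≠ 0) (hH : HasElem H k) : H.FiniteIndex := by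
  set N := Subgroup.normalClosure {x : SpecialLinearGroup ι ℤ |
    ∃ i j : ι, i ≠ j ∧ ∃ c : ℤ, x.1 = 1 + single i j ((k : ℤ) ^ 2 * c)} with hNdef
  have hNH : N ≤ H := by
    refine le_trans ?_ H.normalCore_le
    refine Subgroup.normalClosure_le_normal ?_
    rintro x ⟨i, j, hij, c, hx⟩ g
    exact hH.conj hι i j hij c x g hx
  have hN : HasElem N (k ^ 2 : ℕ) := by
    rintro i j hij _ ⟨c, rfl⟩
    refine ⟨SpecialLinearGroup.transvection hij _, Subgroup.subset_normalClosure
      ⟨i, j, hij, c, ?_⟩, rfl⟩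
    push_cast
    rfl
  have := HasElem.finiteIndex_of_normal hι (pow_ne_zero 2 hk) hN
  exact Subgroup.finiteIndex_of_le hNH

end SpecialLinear

/-- For `n ≥ 3` and `k ≥ 1`, the subgroup of `SL_n(ℤ)` generated by the
upper triangular unipotent matrices and the lower triangular unipotent matrices lying in
the principal congruence subgroup `SL_n(kℤ)` has finite index in `SL_n(ℤ)`. -/
theorem unipotent_generators_sl_n (n k : ℕ) (hn : 3 ≤ n) (hk : 1 ≤ k) :
    (Subgroup.closure
      ({g : Matrix.SpecialLinearGroup (Fin n) ℤ |
          (∀ i, g.1 i i = 1) ∧ (∀ i j : Fin n, j < i → g.1 i j = 0) ∧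
          (∀ i j : Fin n, (k : ℤ) ∣ (g.1 i j - if i = j then 1 else 0))} ∪
       {g : Matrix.SpecialLinearGroup (Fin n) ℤ |
          (∀ i, g.1 i i = 1) ∧ (∀ i j : Fin n, i < j → g.1 i j = 0) ∧
          (∀ i j : Fin n, (k : ℤ) ∣ (g.1 i j - if i = j then 1 else 0))})).FiniteIndex := by
  refine HasElem.finiteIndex (by simpa using hn) (k := k) (by omega) ?_
  intro i j hij c hc
  refine ⟨SpecialLinearGroup.transvection hij c, Subgroup.subset_closure ?_, rfl⟩
  have e : ∀ a b, (SpecialLinearGroup.transvection hij c).1 a b =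
      (if a = b then 1 else 0) + if i = a ∧ j = b then c else 0 := by
    intro a b
    rw [SpecialLinearGroup.transvection_coe, Matrix.add_apply, one_apply, single_apply]
  have hdvd : ∀ a b, (k : ℤ) ∣ ((SpecialLinearGroup.transvection hij c).1 a b -
      if a = b then 1 else 0) := by
    intro a b
    rw [e, add_sub_cancel_left]
    split_ifs
    exacts [hc, dvd_zero _]
  rcases lt_or_gt_of_ne hij with h | h
  · refine Or.inl ⟨fun a => ?_, fun a b hab => ?_, hdvd⟩ <;> rw [e] <;> grind
  · refine Or.inr ⟨fun a => ?_, fun a b hab => ?_, hdvd⟩ <;> rw [e] <;> grind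
end

section
/- Let n ≥ 3, let 1 ≤ m < n, and let k ≥ 1. Let U⁺(kℤ) be the set of matrices in SL_n(ℤ) of the form I + X where X is supported in the top-right m×(n−m) block (rows 1..m, columns m+1..n) and all entries of X are divisible by k, and let U⁻(kℤ) be the analogous set with X supported in the bottom-left (n−m)×m block. Then the subgroup of SL_n(ℤ) generated by U⁺(kℤ) and U⁻(kℤ) has finite index in SL_n(ℤ). -/
/-!
Let `Γ` be the generated group. Everything takes place in `SL_n(ℤ)` with `n ≥ 3`, and
`HasElem H q` says that a subgroup `H` contains all elementary matrices `1 + q a E_{ij}`.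

* A commutator of one element of `U⁺(kℤ)` and one of `U⁻(kℤ)` gives the elementary matrices inside
  the two diagonal blocks, so `Γ` contains the elementary matrices of level `k²`.
* If `HasElem H q`, then `H` contains every transvection `1 + q² v w` with `v` unimodular and
  `w v = 0` (`HasElem.transvection_mem`, the argument of Suslin and Tits). Hence it contains every
  conjugate of the elementary matrices of level `q²` (`HasElem.conj_mem`), so the normal core `N`
  of `Γ` contains the elementary matrices of level `k⁴`.
* Let `N` be normal with `HasElem N q`, `q ≠ 0`. By the stable range condition for `ℤ`, an element
  of the congruence subgroup of level `q²` can be multiplied by elements of `N` until its `p`-th row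
  and column are trivial, while staying congruent to `1` modulo `q`. Such a matrix commutes modulo
  `N` with the elementary matrices in the `p`-th row and column, which generate `SL_n(ℤ)`
  (`HasElem.mem_of_one`, by Euclid's algorithm). So the congruence subgroup of level `q²` has
  central image in `SL_n(ℤ) / N` (`HasElem.mk_mem_center`), whose centre therefore has finite index.
* Elementary matrices are commutators, so `SL_n(ℤ) / N` is perfect. A perfect group whose centre has
  finite index is finite by Schur's theorem (`finite_of_perfect`). Thus `N`, and with it `Γ`, has
  finite index.
-/

namespace BlockUnipotent

open Matrix

variable {ι : Type*} [Fintype ι] [DecidableEq ι]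

/-! ### Conjugates of elementary matrices -/

/-- `M` is the matrix of an element of the subgroup `H` of `SL_ι(ℤ)`. -/
def InM (H : Subgroup (SpecialLinearGroup ι ℤ)) (M : Matrix ι ι ℤ) : Prop :=
  ∃ g ∈ H, (g : Matrix ι ι ℤ) = M

/-- `H` contains every elementary matrix `1 + q a E_{ij}` with `i ≠ j`, `a ∈ ℤ`. -/
def HasElem (H : Subgroup (SpecialLinearGroup ι ℤ)) (q : ℤ) : Prop :=
  ∀ (i j : ι) (hij : i ≠ j) (a : ℤ), SpecialLinearGroup.transvection hij (q * a) ∈ H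

lemma InM.one (H : Subgroup (SpecialLinearGroup ι ℤ)) : InM H 1 := ⟨1, H.one_mem, by simp⟩

lemma InM.mul {H : Subgroup (SpecialLinearGroup ι ℤ)} {M M' : Matrix ι ι ℤ}
    (h : InM H M) (h' : InM H M') : InM H (M * M') := by
  obtain ⟨g, hg, rfl⟩ := h
  obtain ⟨g', hg', rfl⟩ := h'
  exact ⟨g * g', H.mul_mem hg hg', by simp⟩

lemma InM.mem {H : Subgroup (SpecialLinearGroup ι ℤ)} {g : SpecialLinearGroup ι ℤ}
    (h : InM H (g : Matrix ι ι ℤ)) : g ∈ H := by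
  obtain ⟨g', hg', h⟩ := h
  rwa [← Subtype.ext h]

lemma transvection_coe_vec {i j : ι} (hij : i ≠ j) (a : ℤ) :
    (SpecialLinearGroup.transvection hij a : Matrix ι ι ℤ) =
      1 + vecMulVec (Pi.single i 1) (Pi.single j a) := by
  rw [SpecialLinearGroup.transvection_coe]
  congr 1
  ext x y
  simp only [vecMulVec_apply, Pi.single_apply, single_apply]
  grind

/-- Row vectors orthogonal to `v` add up under multiplication of the matrices `1 + v w`. -/
lemma InM.sum_right {H : Subgroup (SpecialLinearGroup ι ℤ)} {κ : Type*} (s : Finset κ)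
    (v : ι → ℤ) (w : κ → ι → ℤ) (hw : ∀ x ∈ s, w x ⬝ᵥ v = 0)
    (h : ∀ x ∈ s, InM H (1 + vecMulVec v (w x))) :
    InM H (1 + vecMulVec v (∑ x ∈ s, w x)) := by
  classical
  induction s using Finset.induction_on with
  | empty => simpa using InM.one H
  | insert a s ha ih =>
    have h1 := ih (fun x hx => hw x (Finset.mem_insert_of_mem hx))
      (fun x hx => h x (Finset.mem_insert_of_mem hx))
    have h2 := h a (Finset.mem_insert_self _ _)
    convert h2.mul h1 using 1
    rw [Finset.sum_insert ha, mul_add, mul_one, add_mul, one_mul, vecMulVec_mul_vecMulVec,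
      hw a (Finset.mem_insert_self _ _), vecMulVec_add]
    simp [add_assoc]

/-- Column vectors annihilated by `w` add up under multiplication of the matrices `1 + v w`. -/
lemma InM.sum_left {H : Subgroup (SpecialLinearGroup ι ℤ)} {κ : Type*} (s : Finset κ)
    (v : κ → ι → ℤ) (w : ι → ℤ) (hw : ∀ x ∈ s, w ⬝ᵥ v x = 0)
    (h : ∀ x ∈ s, InM H (1 + vecMulVec (v x) w)) :
    InM H (1 + vecMulVec (∑ x ∈ s, v x) w) := by
  classical
  induction s using Finset.induction_on with
  | empty => simpa using InM.one H
  | insert a s ha ih =>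
    have h1 := ih (fun x hx => hw x (Finset.mem_insert_of_mem hx))
      (fun x hx => h x (Finset.mem_insert_of_mem hx))
    have h2 := h a (Finset.mem_insert_self _ _)
    convert h1.mul h2 using 1
    rw [Finset.sum_insert ha, mul_add, mul_one, add_mul, one_mul, vecMulVec_mul_vecMulVec,
      hw a (Finset.mem_insert_self _ _), add_vecMulVec]
    simp only [zero_smul, vecMulVec_zero, add_zero]
    abel

lemma HasElem.row {H : Subgroup (SpecialLinearGroup ι ℤ)} {q : ℤ} (hH : HasElem H q)
    (i : ι) (w : ι → ℤ) (hi : w i = 0) (hw : ∀ j, q ∣ w j) :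
    InM H (1 + vecMulVec (Pi.single i 1) w) := by
  have key : w = ∑ j, Pi.single j (w j) := by
    ext x; simp [Finset.sum_apply, Pi.single_apply]
  rw [key]
  refine InM.sum_right _ _ _ (fun j _ => ?_) (fun j _ => ?_)
  · by_cases h : i = j
    · subst h; simp [hi]
    · simp [Ne.symm h]
  · by_cases h : i = j
    · subst h; simpa [hi] using InM.one H
    · obtain ⟨a, ha⟩ := hw j
      refine ⟨_, hH i j h a, ?_⟩
      rw [transvection_coe_vec, ha]

lemma HasElem.col {H : Subgroup (SpecialLinearGroup ι ℤ)} {q : ℤ} (hH : HasElem H q)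
    (j : ι) (v : ι → ℤ) (hj : v j = 0) (hv : ∀ i, q ∣ v i) :
    InM H (1 + vecMulVec v (Pi.single j 1)) := by
  have key : v = ∑ i, Pi.single i (v i) := by
    ext x; simp [Finset.sum_apply, Pi.single_apply]
  rw [key]
  refine InM.sum_left _ _ _ (fun i _ => ?_) (fun i _ => ?_)
  · by_cases h : i = j
    · subst h; simp [hj]
    · simp [Ne.symm h]
  · by_cases h : i = j
    · subst h; simpa [hj] using InM.one H
    · obtain ⟨a, ha⟩ := hv i
      refine ⟨_, hH i j h a, ?_⟩
      rw [transvection_coe_vec, ha]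
      congr 1
      ext x y
      simp only [vecMulVec_apply, Pi.single_apply]
      split_ifs <;> simp

/-- The commutator of `1 + X` and `1 + Y` is `1 + X Y` when `X² = Y² = Y X = 0`. -/
lemma InM.commutator {H : Subgroup (SpecialLinearGroup ι ℤ)} {X Y : Matrix ι ι ℤ}
    (hX : InM H (1 + X)) (hX' : InM H (1 + -X)) (hY : InM H (1 + Y)) (hY' : InM H (1 + -Y))
    (hXX : X * X = 0) (hYY : Y * Y = 0) (hYX : Y * X = 0) : InM H (1 + X * Y) := by
  convert ((hX.mul hY).mul hX').mul hY' using 1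
  have e1 : (1 + X) * (1 + Y) * (1 + -X) = 1 + Y + X * Y := by
    calc _ = 1 + Y + X * Y - X * X - Y * X - X * (Y * X) := by noncomm_ring
      _ = _ := by rw [hXX, hYX]; simp
  rw [e1]
  calc _ = 1 + X * Y - Y * Y - X * (Y * Y) := by rw [hYY]; simp
    _ = _ := by noncomm_ring

/-- If `v` and `w` vanish at the index `p`, then `1 + q² v w` is the commutator of `1 + q v e_p`
and `1 + q e_p w`, which are products of elementary matrices of level `q`. -/
lemma HasElem.two_block {H : Subgroup (SpecialLinearGroup ι ℤ)} {q : ℤ} (hH : HasElem H q)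
    (p : ι) (v w : ι → ℤ) (hv : v p = 0) (hw : w p = 0) (hwv : w ⬝ᵥ v = 0) :
    InM H (1 + vecMulVec v ((q * q) • w)) := by
  have e : vecMulVec v ((q * q) • w) = vecMulVec (q • v) (Pi.single p 1) *
      vecMulVec (Pi.single p 1) (q • w) := by
    rw [vecMulVec_mul_vecMulVec]
    simp [mul_smul, smul_vecMulVec, vecMulVec_smul, -zsmul_eq_mul]
  rw [e]
  apply InM.commutator
  · exact hH.col p _ (by simp [hv]) (fun i => by simp)
  · rw [← neg_vecMulVec]
    exact hH.col p _ (by simp [hv]) (fun i => by simp)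
  · exact hH.row p _ (by simp [hw]) (fun i => by simp)
  · rw [← vecMulVec_neg]
    exact hH.row p _ (by simp [hw]) (fun i => by simp)
  · rw [vecMulVec_mul_vecMulVec]; simp [hv]
  · rw [vecMulVec_mul_vecMulVec]; simp [hw]
  · rw [vecMulVec_mul_vecMulVec]; simp [hwv, smul_dotProduct, dotProduct_smul, -zsmul_eq_mul]

/-- Every transvection `1 + q² v w` along a unimodular vector `v` lies in a group containing the
elementary matrices of level `q`.  With `u v = 1` and `w v = 0`, one has
`w = ∑ w_k u_l (v_l e_k - v_k e_l)`, which reduces the claim to `w = v_l e_k - v_k e_l`;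
such a `w` only sees the coordinates `k, l` of `v`, and the other coordinates of `v` contribute
elementary factors. -/
lemma HasElem.transvection_mem {H : Subgroup (SpecialLinearGroup ι ℤ)} {q : ℤ}
    (hH : HasElem H q) (hι : ∀ k l : ι, ∃ p, p ≠ k ∧ p ≠ l)
    (u v w : ι → ℤ) (huv : u ⬝ᵥ v = 1) (hwv : w ⬝ᵥ v = 0) :
    InM H (1 + vecMulVec v ((q * q) • w)) := by
  set b : ι → ι → ι → ℤ := fun k l => Pi.single k (v l) - Pi.single l (v k) with hb
  have hbv : ∀ k l, b k l ⬝ᵥ v = 0 := fun k l => by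
    simp [hb, sub_dotProduct, mul_comm]
  have key : (q * q) • w = ∑ x : ι × ι, (q * q) • (w x.1 * u x.2) • b x.1 x.2 := by
    rw [← Finset.smul_sum]
    congr 1
    ext y
    simp only [Finset.sum_apply, Pi.smul_apply, hb, Pi.sub_apply, smul_eq_mul,
      Fintype.sum_prod_type, mul_sub, Finset.sum_sub_distrib, Pi.single_apply, mul_ite, mul_zero]
    have h1 : ∑ k, ∑ l, (if y = k then w k * u l * v l else 0) = w y := by
      rw [Finset.sum_eq_single y]
      · simp only [if_true, mul_assoc, ← Finset.mul_sum]
        have : ∑ l, u l * v l = 1 := huv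
        rw [this, mul_one]
      · intro k _ hk; simp [Ne.symm hk]
      · simp
    have h2 : ∑ k, ∑ l, (if y = l then w k * u l * v k else 0) = 0 := by
      have : ∑ l, w l * v l = 0 := hwv
      simp only [Finset.sum_ite_eq, Finset.mem_univ, if_true]
      calc _ = (∑ l, w l * v l) * u y := by
            rw [Finset.sum_mul]; exact Finset.sum_congr rfl (fun _ _ => by ring)
        _ = 0 := by rw [this, zero_mul]
    rw [h1, h2, sub_zero]
  rw [key]
  refine InM.sum_right _ _ _ (fun x _ => by
    simp [hbv, smul_dotProduct, -zsmul_eq_mul]) ?_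
  rintro ⟨k, l⟩ -
  dsimp only
  set c := w k * u l
  have hsplit : v = ∑ p : Option ι, (match p with
      | none => (fun p => if p = k ∨ p = l then v p else 0)
      | some p => (if p = k ∨ p = l then 0 else Pi.single p (v p)) : ι → ℤ) := by
    rw [Fintype.sum_option]
    ext y
    simp only [Pi.add_apply, Finset.sum_apply]
    rw [Finset.sum_eq_single y]
    · split_ifs <;> simp
    · intro p _ hp
      split_ifs
      · rfl
      · simp [Ne.symm hp]
    · simp
  have hb0 : ∀ p, ¬ (p = k ∨ p = l) → b k l p = 0 := by
    intro p hp
    push Not at hp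
    simp [hb, hp.1, hp.2]
  nth_rewrite 1 [hsplit]
  refine InM.sum_left _ _ _ ?_ ?_
  · rintro (_ | p) -
    · simp [hb, sub_dotProduct, smul_dotProduct, mul_comm, -zsmul_eq_mul]
    · dsimp only
      split_ifs with h
      · simp
      · simp [hb0 p h]
  · rintro (_ | p) -
    · dsimp only
      obtain ⟨p, hpk, hpl⟩ := hι k l
      refine hH.two_block p _ _ (by simp [hpk, hpl]) (by simp [hb0 p (by simp [hpk, hpl])]) ?_
      simp [hb, sub_dotProduct, smul_dotProduct, mul_comm, -zsmul_eq_mul]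
    · dsimp only
      split_ifs with h
      · simpa using InM.one H
      · have e : vecMulVec (Pi.single p (v p)) ((q * q) • c • b k l) =
            vecMulVec (Pi.single p 1) ((v p * (q * q)) • c • b k l) := by
          ext x y
          simp only [vecMulVec_apply, Pi.single_apply, Pi.smul_apply, smul_eq_mul]
          split_ifs <;> ring
        rw [e]
        refine hH.row p _ (by simp [hb0 p h]) (fun j => ?_)
        exact ⟨v p * q * c * b k l j, by simp only [Pi.smul_apply, smul_eq_mul]; ring⟩

/-- A conjugate of an elementary matrix of level `q²` lies in any group containing the
elementary matrices of level `q`. -/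
lemma HasElem.conj_mem {H : Subgroup (SpecialLinearGroup ι ℤ)} {q : ℤ}
    (hH : HasElem H q) (hι : ∀ k l : ι, ∃ p, p ≠ k ∧ p ≠ l)
    (g : SpecialLinearGroup ι ℤ) {i j : ι} (hij : i ≠ j) (a : ℤ) :
    g * SpecialLinearGroup.transvection hij (q * q * a) * g⁻¹ ∈ H := by
  apply InM.mem
  have hinv : (↑g⁻¹ : Matrix ι ι ℤ) * (↑g : Matrix ι ι ℤ) = 1 := by
    rw [← Matrix.SpecialLinearGroup.coe_mul, inv_mul_cancel, Matrix.SpecialLinearGroup.coe_one]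
  have hinv' : (↑g : Matrix ι ι ℤ) * (↑g⁻¹ : Matrix ι ι ℤ) = 1 := by
    rw [← Matrix.SpecialLinearGroup.coe_mul, mul_inv_cancel, Matrix.SpecialLinearGroup.coe_one]
  have hent : ∀ x y, (↑g⁻¹ : Matrix ι ι ℤ) x ⬝ᵥ (↑g : Matrix ι ι ℤ).col y =
      (1 : Matrix ι ι ℤ) x y := by
    intro x y
    rw [← hinv]; rfl
  have := hH.transvection_mem hι ((↑g⁻¹ : Matrix ι ι ℤ) i) ((↑g : Matrix ι ι ℤ).col i)
    (a • (↑g⁻¹ : Matrix ι ι ℤ) j)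
    (by rw [hent, one_apply_eq])
    (by rw [smul_dotProduct, hent, one_apply_ne hij.symm, smul_zero])
  convert this using 1
  rw [Matrix.SpecialLinearGroup.coe_mul, Matrix.SpecialLinearGroup.coe_mul, transvection_coe_vec,
    mul_add, add_mul, mul_one, hinv', mul_vecMulVec, vecMulVec_mul]
  congr 1
  rw [mulVec_single_one]
  congr 1
  ext y
  simp [vecMul, single_dotProduct, mul_assoc]


/-! ### Elementary generation of `SL_n(ℤ)` -/

/-- Some element of `E` fixing the basis vectors indexed by `s` carries `v` to `v'`. -/
def Red (E : Subgroup (SpecialLinearGroup ι ℤ)) (s : Finset ι) (v v' : ι → ℤ) : Prop :=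
  ∃ h ∈ E, (∀ x ∈ s, (h : Matrix ι ι ℤ) *ᵥ Pi.single x 1 = Pi.single x 1) ∧
    (h : Matrix ι ι ℤ) *ᵥ v = v'

lemma Red.trans {E : Subgroup (SpecialLinearGroup ι ℤ)} {s : Finset ι} {v v' v'' : ι → ℤ}
    (h : Red E s v v') (h' : Red E s v' v'') : Red E s v v'' := by
  obtain ⟨g, hg, hs, hv⟩ := h
  obtain ⟨g', hg', hs', hv'⟩ := h'
  refine ⟨g' * g, E.mul_mem hg' hg, fun x hx => ?_, ?_⟩
  · rw [Matrix.SpecialLinearGroup.coe_mul, ← mulVec_mulVec, hs x hx, hs' x hx]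
  · rw [Matrix.SpecialLinearGroup.coe_mul, ← mulVec_mulVec, hv, hv']

lemma one_add_vecMulVec_mulVec (a b v : ι → ℤ) :
    (1 + vecMulVec a b) *ᵥ v = v + (b ⬝ᵥ v) • a := by
  rw [add_mulVec, one_mulVec, vecMulVec_mulVec]
  simp

lemma Red.col {E : Subgroup (SpecialLinearGroup ι ℤ)} (hE : HasElem E 1) {s : Finset ι} {l : ι}
    (hl : l ∉ s) (v a : ι → ℤ) (ha : a l = 0) : Red E s v (v + v l • a) := by
  obtain ⟨h, hh, e⟩ := hE.col l a ha (fun i => one_dvd _)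
  refine ⟨h, hh, fun x hx => ?_, ?_⟩
  · have : l ≠ x := fun h => hl (h ▸ hx)
    rw [e, one_add_vecMulVec_mulVec]
    simp [this]
  · rw [e, one_add_vecMulVec_mulVec]
    simp

lemma Red.clear {E : Subgroup (SpecialLinearGroup ι ℤ)} (hE : HasElem E 1) {s : Finset ι} {j : ι}
    (hj : j ∉ s) (v : ι → ℤ) (hv : v j = 1) : Red E s v (Pi.single j 1) := by
  convert Red.col hE hj v (Pi.single j 1 - v) (by simp [hv]) using 1
  simp [hv]

lemma Red.of_unit {E : Subgroup (SpecialLinearGroup ι ℤ)} (hE : HasElem E 1) {s : Finset ι}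
    {j l : ι} (hj : j ∉ s) (hl : l ∉ s) (hlj : l ≠ j) (v : ι → ℤ) (hv : v l * v l = 1) :
    Red E s v (Pi.single j 1) := by
  refine (Red.col hE hl v (Pi.single j ((1 - v j) * v l)) (by simp [hlj])).trans
    (Red.clear hE hj _ ?_)
  simp only [Pi.add_apply, Pi.smul_apply, Pi.single_eq_same, smul_eq_mul]
  linear_combination (1 - v j) * hv

/-- Euclid's algorithm on the coordinates of `v` outside `s`. -/
lemma Red.of_unimodular {E : Subgroup (SpecialLinearGroup ι ℤ)} (hE : HasElem E 1) {s : Finset ι}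
    {j l : ι} (hj : j ∉ s) (hl : l ∉ s) (hlj : l ≠ j) (v : ι → ℤ)
    (hv : ∀ d : ℤ, (∀ x, x ∉ s → d ∣ v x) → IsUnit d) : Red E s v (Pi.single j 1) := by
  induction hN : ∑ x ∈ sᶜ, (v x).natAbs using Nat.strong_induction_on generalizing v with
  | _ N ih =>
  by_cases hred : ∃ i y, i ∉ s ∧ y ∉ s ∧ i ≠ y ∧ v y ≠ 0 ∧ (v y).natAbs ≤ (v i).natAbs
  · obtain ⟨i, y, hi, hy, hiy, hy0, hle⟩ := hred
    set v' := v + v y • (Pi.single i (-(v i / v y)) : ι → ℤ) with hv'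
    have h1 : Red E s v v' := Red.col hE hy v _ (by simp [hiy.symm])
    have hvi : v' i = v i % v y := by
      simp only [hv', Pi.add_apply, Pi.smul_apply, Pi.single_eq_same, smul_eq_mul, Int.emod_def]
      ring
    have hvx : ∀ x, x ≠ i → v' x = v x := by
      intro x hx
      simp [hv', hx]
    refine h1.trans (ih _ ?_ v' ?_ rfl)
    · rw [← hN]
      refine Finset.sum_lt_sum (fun x _ => ?_) ⟨i, by simpa using hi, ?_⟩
      · by_cases hx : x = i
        · subst hx
          rw [hvi]
          have := Int.abs_eq_natAbs (v y) ▸ Int.emod_lt_abs (v x) hy0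
          have := Int.emod_nonneg (v x) hy0
          omega
        · rw [hvx x hx]
      · rw [hvi]
        have := Int.abs_eq_natAbs (v y) ▸ Int.emod_lt_abs (v i) hy0
        have := Int.emod_nonneg (v i) hy0
        omega
    · intro d hd
      refine hv d (fun x hx => ?_)
      by_cases hxi : x = i
      · subst hxi
        have h2 := hd x hx
        have h3 := hd y hy
        rw [hvx y hiy.symm] at h3
        rw [hvi] at h2
        rw [← Int.emod_add_mul_ediv (v x) (v y)]
        exact dvd_add h2 (h3.mul_right _)
      · rw [← hvx x hxi]; exact hd x hx
  · push Not at hred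
    obtain ⟨l0, hl0, hne⟩ : ∃ x, x ∉ s ∧ v x ≠ 0 := by
      by_contra! hcon
      exact not_isUnit_zero (hv 0 (fun x hx => by rw [hcon x hx]))
    have hu : v l0 * v l0 = 1 := by
      have : IsUnit (v l0) := by
        refine hv _ (fun x hx => ?_)
        by_cases hxl : x = l0
        · rw [hxl]
        · have h1 := hred x l0 hx hl0 hxl hne
          have h2 : v x = 0 := by
            by_contra h0
            have := hred l0 x hl0 hx (Ne.symm hxl) h0
            omega
          rw [h2]; exact dvd_zero _
      rcases Int.isUnit_iff.1 this with h | h <;> rw [h] <;> norm_num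
    by_cases h : l0 = j
    · subst h
      refine (Red.of_unit hE hl hl0 hlj.symm v hu).trans (Red.of_unit hE hl0 hl hlj _ ?_)
      simp
    · exact Red.of_unit hE hj hl0 h v hu

/-- A subgroup containing all elementary matrices is all of `SL_n(ℤ)`: the columns of `g` are
turned into basis vectors one at a time, `s` being the set of columns already treated. -/
lemma HasElem.mem_of_one {E : Subgroup (SpecialLinearGroup ι ℤ)} (hE : HasElem E 1)
    (g : SpecialLinearGroup ι ℤ) : g ∈ E := by
  suffices H : ∀ (N : ℕ) (s : Finset ι), sᶜ.card = N → ∀ g : SpecialLinearGroup ι ℤ,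
      (∀ x ∈ s, (g : Matrix ι ι ℤ) *ᵥ Pi.single x 1 = Pi.single x 1) → g ∈ E from
    H _ ∅ rfl g (by simp)
  intro N
  induction N with
  | zero =>
    intro s hs g hg
    have hs' : s = Finset.univ := by
      rwa [Finset.card_eq_zero, Finset.compl_eq_empty_iff] at hs
    subst hs'
    have : g = 1 := by
      apply Subtype.ext
      change (g : Matrix ι ι ℤ) = 1
      ext x y
      have := congrFun (hg y (Finset.mem_univ _)) x
      rw [mulVec_single_one] at this
      simpa [one_apply, Pi.single_apply] using this
    rw [this]; exact E.one_mem
  | succ N ih =>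
    intro s hs g hg
    obtain ⟨j, hj⟩ : ∃ j, j ∈ sᶜ := Finset.card_pos.1 (by omega)
    rw [Finset.mem_compl] at hj
    have hred : Red E s ((g : Matrix ι ι ℤ) *ᵥ Pi.single j 1) (Pi.single j 1) := by
      by_cases hex : ∃ l, l ∉ s ∧ l ≠ j
      · obtain ⟨l, hl, hlj⟩ := hex
        refine Red.of_unimodular hE hj hl hlj _ (fun d hd => ?_)
        have hinv : (↑g⁻¹ : Matrix ι ι ℤ) * (↑g : Matrix ι ι ℤ) = 1 := by
          rw [← Matrix.SpecialLinearGroup.coe_mul, inv_mul_cancel,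
            Matrix.SpecialLinearGroup.coe_one]
        have h1 := congrFun (congrFun hinv j) j
        rw [one_apply_eq, mul_apply] at h1
        apply isUnit_of_dvd_one
        rw [← h1]
        refine Finset.dvd_sum (fun x _ => ?_)
        by_cases hx : x ∈ s
        · have h2 : (↑g⁻¹ : Matrix ι ι ℤ) *ᵥ Pi.single x 1 = Pi.single x 1 := by
            nth_rewrite 1 [← hg x hx]
            rw [mulVec_mulVec, hinv, one_mulVec]
          have h3 := congrFun h2 j
          rw [mulVec_single_one] at h3
          have : j ≠ x := fun h => hj (h ▸ hx)
          have h4 : (↑g⁻¹ : Matrix ι ι ℤ) j x = 0 := by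
            simpa only [col_apply, Pi.single_eq_of_ne this] using h3
          rw [h4, zero_mul]; exact dvd_zero _
        · have := hd x hx
          rw [mulVec_single_one] at this
          exact Dvd.dvd.mul_left this _
      · push Not at hex
        refine Red.clear hE hj _ ?_
        -- only column `j` differs from the identity, so its diagonal entry is the determinant
        have h1 : (g : Matrix ι ι ℤ) =
            (1 : Matrix ι ι ℤ).updateCol j ((g : Matrix ι ι ℤ) *ᵥ Pi.single j 1) := by
          ext x y
          rw [updateCol_apply]
          split_ifs with h
          · subst h; simp
          · have hy : y ∈ s := by by_contra hy; exact h (hex y hy)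
            have := congrFun (hg y hy) x
            rw [mulVec_single_one] at this
            simpa [one_apply, Pi.single_apply] using this
        have h2 : (g : Matrix ι ι ℤ).det = 1 := g.2
        rw [h1, ← cramer_apply, cramer_one] at h2
        exact h2
    obtain ⟨h, hh, hs1, hv⟩ := hred
    have hmem : h * g ∈ E := by
      refine ih (insert j s) ?_ _ ?_
      · rw [Finset.card_compl] at hs ⊢
        rw [Finset.card_insert_of_notMem hj]
        omega
      · intro x hx
        rw [Matrix.SpecialLinearGroup.coe_mul, ← mulVec_mulVec]
        rcases Finset.mem_insert.1 hx with rfl | hx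
        · exact hv
        · rw [hg x hx, hs1 x hx]
    exact (E.mul_mem_cancel_left hh).1 hmem

/-! ### Reduction of a congruence subgroup to a smaller block -/

lemma exists_sum_eq_one (w : ι → ℤ) (hw : ∀ p : ℕ, p.Prime → ¬ ∀ i, (p : ℤ) ∣ w i) :
    ∃ y : ι → ℤ, ∑ i, y i * w i = 1 := by
  rw [← Ideal.mem_span_range_iff_exists_fun]
  set I := Ideal.span (Set.range w) with hI
  have hd : ∀ i, Submodule.IsPrincipal.generator I ∣ w i := fun i =>
    (Submodule.IsPrincipal.mem_iff_generator_dvd I).1 (Ideal.subset_span ⟨i, rfl⟩)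
  rw [Submodule.IsPrincipal.mem_iff_generator_dvd I, ← isUnit_iff_dvd_one, Int.isUnit_iff_natAbs_eq]
  by_contra hne
  obtain ⟨p, hp, hpd⟩ := Nat.exists_prime_and_dvd hne
  exact hw p hp (fun i => (Int.natCast_dvd.2 hpd).trans (hd i))

/-- Stable range condition: if the coordinates of `u` (at least two of them, ignoring the
coordinate `p`) and `a` have no common prime factor, adding multiples of `a` to the coordinates
of `u` makes `u` unimodular. -/
lemma stable_range {p i₀ i₁ : ι} (h0 : i₀ ≠ p) (h1 : i₁ ≠ p) (h01 : i₀ ≠ i₁)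
    (u : ι → ℤ) (a : ℤ) (hup : u p = 0)
    (hu : ∀ r : ℕ, r.Prime → (∀ i, (r : ℤ) ∣ u i) → ¬ (r : ℤ) ∣ a) :
    ∃ x y : ι → ℤ, x p = 0 ∧ y p = 0 ∧ ∑ i, y i * (u i + x i * a) = 1 := by
  suffices H : ∃ x : ι → ℤ, x p = 0 ∧
      ∀ r : ℕ, r.Prime → ¬ ∀ i, (r : ℤ) ∣ u i + x i * a by
    obtain ⟨x, hx, hr⟩ := H
    obtain ⟨y, hy⟩ := exists_sum_eq_one _ hr
    refine ⟨x, Function.update y p 0, hx, by simp, ?_⟩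
    rw [← hy]
    refine Finset.sum_congr rfl (fun i _ => ?_)
    by_cases hi : i = p
    · subst hi; simp [hup, hx]
    · simp [hi]
  by_cases hz : ∀ i, i ≠ i₀ → u i = 0
  · refine ⟨Pi.single i₁ 1, by simp [h1.symm], fun r hr hall => ?_⟩
    have e0 := hall i₀
    have e1 := hall i₁
    rw [Pi.single_eq_of_ne h01, zero_mul, add_zero] at e0
    rw [Pi.single_eq_same, hz i₁ h01.symm, one_mul, zero_add] at e1
    refine hu r hr (fun i => ?_) e1
    by_cases hi : i = i₀
    · rwa [hi]
    · rw [hz i hi]; exact dvd_zero _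
  · push Not at hz
    obtain ⟨i₂, h20, hc⟩ := hz
    -- the multiplier is the product of the primes dividing `u i₂` but not `u i₀`
    set S := (u i₂).natAbs.primeFactors.filter (fun r : ℕ => ¬ (r : ℤ) ∣ u i₀) with hS
    refine ⟨Pi.single i₀ (∏ r ∈ S, (r : ℤ)), by simp [h0.symm], fun r hr hall => ?_⟩
    have e0 := hall i₀
    rw [Pi.single_eq_same] at e0
    have hne : ∀ i, i ≠ i₀ → (r : ℤ) ∣ u i := fun i hi => by
      have := hall i
      rwa [Pi.single_eq_of_ne hi, zero_mul, add_zero] at this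
    have hrp : Prime (r : ℤ) := Nat.prime_iff_prime_int.1 hr
    by_cases hr0 : (r : ℤ) ∣ u i₀
    · have e1 := (dvd_add_right hr0).1 e0
      rcases hrp.dvd_or_dvd e1 with h | h
      · obtain ⟨s, hs, hrs⟩ := (hrp.dvd_finsetProd_iff _).1 h
        rw [hS, Finset.mem_filter] at hs
        have : r = s := (Nat.prime_dvd_prime_iff_eq hr
          (Nat.prime_of_mem_primeFactors hs.1)).1 (Int.natCast_dvd_natCast.1 hrs)
        exact hs.2 (this ▸ hr0)
      · refine hu r hr (fun i => ?_) h
        by_cases hi : i = i₀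
        · rwa [hi]
        · exact hne i hi
    · have hrS : r ∈ S := by
        rw [hS, Finset.mem_filter, Nat.mem_primeFactors]
        exact ⟨⟨hr, Int.natCast_dvd.1 (hne i₂ h20), by simpa using hc⟩, hr0⟩
      have := Finset.dvd_prod_of_mem (fun r : ℕ => (r : ℤ)) hrS
      exact hr0 ((dvd_add_left (this.mul_right a)).1 e0)

/-- A unimodular column congruent to `e_p` modulo `q²` is carried to `e_p` by a group containing the
elementary matrices of level `q`. -/
lemma HasElem.exists_mulVec_eq {H : Subgroup (SpecialLinearGroup ι ℤ)} {q : ℤ}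
    (hH : HasElem H q) {p i₀ i₁ : ι} (h0 : i₀ ≠ p) (h1 : i₁ ≠ p) (h01 : i₀ ≠ i₁)
    (r v t : ι → ℤ) (hrv : ∑ i, r i * v i = 1)
    (hv : ∀ i, v i = (Pi.single p 1 : ι → ℤ) i + q * q * t i) :
    ∃ h ∈ H, (h : Matrix ι ι ℤ) *ᵥ v = Pi.single p 1 := by
  have hvp : v p = 1 + q * q * t p := by rw [hv]; simp
  have hvi : ∀ i, i ≠ p → v i = q * (q * t i) := fun i hi => by
    rw [hv, Pi.single_eq_of_ne hi]; ring
  set u : ι → ℤ := fun i => if i = p then 0 else q * t i with hu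
  obtain ⟨x, y, hx, hy, hxy⟩ := stable_range h0 h1 h01 u (v p) (by simp [hu])
    (by
      intro s hs hall ha
      have : (s : ℤ) ∣ 1 := by
        rw [← hrv]
        refine Finset.dvd_sum (fun i _ => Dvd.dvd.mul_left ?_ _)
        by_cases hi : i = p
        · rwa [hi]
        · have := hall i
          simp only [hu, hi, if_false] at this
          rw [hvi i hi]
          exact this.mul_left _
      exact hs.one_lt.ne' (by exact_mod_cast Int.eq_one_of_dvd_one (by positivity) this))
  obtain ⟨g₁, hg₁, e₁⟩ := hH.col p (q • x) (by simp [hx]) (fun i => by simp)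
  obtain ⟨g₂, hg₂, e₂⟩ := hH.row p ((-(q * t p)) • y) (by simp [hy])
    (fun i => ⟨-(t p * y i), by simp only [Pi.smul_apply, smul_eq_mul]; ring⟩)
  set v₁ := (g₁ : Matrix ι ι ℤ) *ᵥ v with hv₁
  have hv₁p : v₁ p = v p := by
    rw [hv₁, e₁, one_add_vecMulVec_mulVec]; simp [hx]
  have hv₁i : ∀ i, i ≠ p → v₁ i = q * (u i + x i * v p) := by
    intro i hi
    rw [hv₁, e₁, one_add_vecMulVec_mulVec]
    simp only [single_dotProduct, Pi.add_apply, Pi.smul_apply, smul_eq_mul, hvi i hi, hu, hi,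
      if_false]
    ring
  have hsum : y ⬝ᵥ v₁ = q := by
    have : y ⬝ᵥ v₁ = q * ∑ i, y i * (u i + x i * v p) := by
      rw [Finset.mul_sum]
      refine Finset.sum_congr rfl (fun i _ => ?_)
      by_cases hi : i = p
      · subst hi; simp [hy]
      · rw [hv₁i i hi]; ring
    rw [this, hxy, mul_one]
  set v₂ := (g₂ : Matrix ι ι ℤ) *ᵥ v₁ with hv₂
  have hv₂' : v₂ = v₁ + (-(q * t p) * q) • (Pi.single p 1 : ι → ℤ) := by
    rw [hv₂, e₂, one_add_vecMulVec_mulVec, smul_dotProduct, hsum, smul_eq_mul]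
  have hv₂p : v₂ p = 1 := by
    rw [hv₂']
    simp only [Pi.add_apply, Pi.smul_apply, Pi.single_eq_same, smul_eq_mul, hv₁p, hvp]
    ring
  obtain ⟨g₃, hg₃, e₃⟩ := hH.col p (Pi.single p 1 - v₂) (by simp [hv₂p]) (fun i => by
    by_cases hi : i = p
    · subst hi; simp [hv₂p]
    · rw [Pi.sub_apply, Pi.single_eq_of_ne hi, hv₂', Pi.add_apply, hv₁i i hi, Pi.smul_apply,
        Pi.single_eq_of_ne hi]
      simp)
  refine ⟨g₃ * (g₂ * g₁), H.mul_mem hg₃ (H.mul_mem hg₂ hg₁), ?_⟩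
  rw [Matrix.SpecialLinearGroup.coe_mul, Matrix.SpecialLinearGroup.coe_mul, ← mulVec_mulVec,
    ← mulVec_mulVec, ← hv₁, ← hv₂, e₃, one_add_vecMulVec_mulVec]
  simp [hv₂p]

/-! ### Finite index of normal subgroups containing elementary matrices of some level -/

open scoped commutatorElement

lemma transvection_commutator {i j l : ι} (hij : i ≠ j) (hil : i ≠ l) (hlj : l ≠ j) (a b : ℤ) :
    ⁅SpecialLinearGroup.transvection hil a, SpecialLinearGroup.transvection hlj b⁆ =
      SpecialLinearGroup.transvection hij (a * b) := by
  rw [commutatorElement_def, mul_inv_eq_iff_eq_mul, mul_inv_eq_iff_eq_mul]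
  apply Subtype.ext
  simp only [Matrix.SpecialLinearGroup.coe_mul, SpecialLinearGroup.transvection_coe]
  simp [mul_add, add_mul, single_mul_single_of_ne, hij.symm, hlj.symm]
  abel

/-- The principal congruence subgroup of level `q` in `SL_ι(ℤ)`. -/
def Cong (ι : Type*) [Fintype ι] [DecidableEq ι] (q : ℕ) : Subgroup (SpecialLinearGroup ι ℤ) :=
  (SpecialLinearGroup.map (Int.castRingHom (ZMod q))).ker

lemma mem_Cong {q : ℕ} {g : SpecialLinearGroup ι ℤ} :
    g ∈ Cong ι q ↔ ∀ i j, (q : ℤ) ∣ (g : Matrix ι ι ℤ) i j - (1 : Matrix ι ι ℤ) i j := by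
  rw [Cong, MonoidHom.mem_ker, Matrix.SpecialLinearGroup.ext_iff]
  refine forall_congr' fun i => forall_congr' fun j => ?_
  rw [← ZMod.intCast_zmod_eq_zero_iff_dvd]
  simp [sub_eq_zero, Matrix.one_apply, apply_ite (Int.cast : ℤ → ZMod q)]

lemma HasElem.inf_Cong {H : Subgroup (SpecialLinearGroup ι ℤ)} {q : ℕ} (hH : HasElem H q) :
    HasElem (H ⊓ Cong ι q) q := by
  refine fun i j hij a => ⟨hH i j hij a, mem_Cong.2 fun x y => ?_⟩
  rw [SpecialLinearGroup.transvection_coe]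
  simp only [Matrix.add_apply, add_sub_cancel_left, single_apply]
  split_ifs
  · exact dvd_mul_right _ _
  · exact dvd_zero _

/-- An element `g₂ ≡ 1 (mod q)` whose `p`-th row and column are trivial commutes, modulo a normal
subgroup `N` containing the elementary matrices of level `q`, with the elementary matrices
involving the index `p`. These generate the whole group, so the image of `g₂` is central. -/
lemma HasElem.mk_mem_center_of_block {N : Subgroup (SpecialLinearGroup ι ℤ)} [N.Normal] {q : ℕ}
    (hN : HasElem N q) {p : ι} {g₂ : SpecialLinearGroup ι ℤ} (hg₂C : g₂ ∈ Cong ι q)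
    (hcol : (g₂ : Matrix ι ι ℤ) *ᵥ Pi.single p 1 = Pi.single p 1)
    (hrow : Pi.single p 1 ᵥ* (g₂ : Matrix ι ι ℤ) = Pi.single p 1) :
    QuotientGroup.mk' N g₂ ∈ Subgroup.center (SpecialLinearGroup ι ℤ ⧸ N) := by
  set C := (Subgroup.centralizer {QuotientGroup.mk' N g₂}).comap (QuotientGroup.mk' N) with hC
  have hCmem : ∀ z, z ∈ C ↔ QuotientGroup.mk' N (g₂ * z) = QuotientGroup.mk' N (z * g₂) := by
    intro z
    rw [hC, Subgroup.mem_comap, Subgroup.mem_centralizer_singleton_iff,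
      map_mul _ g₂ z, map_mul _ z g₂, eq_comm]
  have hC1 : ∀ (i : ι) (hi : i ≠ p) (a : ℤ), SpecialLinearGroup.transvection hi a ∈ C := by
    intro i hi a
    rw [hCmem]
    set c : ι → ℤ := (g₂ : Matrix ι ι ℤ) *ᵥ Pi.single i a - Pi.single i a with hc
    obtain ⟨n, hn, en⟩ := hN.col p c (by
      have := congrFun hrow i
      simp only [single_one_vecMul, row_apply, Pi.single_eq_of_ne hi] at this
      simp [hc, Ne.symm hi, this]) (fun y => by
        have := (mem_Cong.1 hg₂C y i).mul_right a
        have e : c y = ((g₂ : Matrix ι ι ℤ) y i - (1 : Matrix ι ι ℤ) y i) * a := by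
          rw [hc, Pi.sub_apply, mulVec, dotProduct_single, sub_mul, Matrix.one_apply,
            Pi.single_apply, ite_mul, one_mul, zero_mul]
        rwa [e])
    have key : g₂ * SpecialLinearGroup.transvection hi a =
        n * (SpecialLinearGroup.transvection hi a * g₂) := by
      apply Subtype.ext
      have ht : (SpecialLinearGroup.transvection hi a : Matrix ι ι ℤ) =
          1 + vecMulVec (Pi.single i a) (Pi.single p 1) := by
        rw [transvection_coe_vec]
        congr 1
        ext x y
        simp only [vecMulVec_apply, Pi.single_apply]
        split_ifs <;> simp
      simp only [Matrix.SpecialLinearGroup.coe_mul]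
      rw [ht, en, ← mul_assoc]
      have : (1 + vecMulVec c (Pi.single p 1)) * (1 + vecMulVec (Pi.single i a) (Pi.single p 1)) =
          1 + vecMulVec ((g₂ : Matrix ι ι ℤ) *ᵥ Pi.single i a) (Pi.single p 1) := by
        rw [mul_add, mul_one, add_mul, one_mul, vecMulVec_mul_vecMulVec, hc, sub_vecMulVec]
        simp [Ne.symm hi]
        abel
      rw [this, mul_add, mul_one, mul_vecMulVec, add_mul, one_mul, vecMulVec_mul, hrow]
    have hnq : QuotientGroup.mk' N n = 1 := (QuotientGroup.eq_one_iff n).2 hn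
    rw [key, map_mul, hnq, one_mul]
  have hC2 : ∀ (j : ι) (hj : p ≠ j) (a : ℤ), SpecialLinearGroup.transvection hj a ∈ C := by
    intro j hj a
    rw [hCmem]
    set c : ι → ℤ := Pi.single j a ᵥ* (g₂ : Matrix ι ι ℤ) - Pi.single j a with hc
    have hcp : c p = 0 := by
      have := congrFun hcol j
      rw [mulVec_single_one] at this
      simp only [col_apply, Pi.single_eq_of_ne hj.symm] at this
      simp [hc, single_vecMul, this, hj]
    obtain ⟨n, hn, en⟩ := hN.row p c hcp (fun y => by
        have := (mem_Cong.1 hg₂C j y).mul_left a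
        have e : c y = a * ((g₂ : Matrix ι ι ℤ) j y - (1 : Matrix ι ι ℤ) j y) := by
          rw [hc, Pi.sub_apply, vecMul, single_dotProduct, mul_sub, Matrix.one_apply,
            Pi.single_apply, mul_ite, mul_one, mul_zero]
          simp only [eq_comm]
        rwa [e])
    have key : g₂ * SpecialLinearGroup.transvection hj a * n =
        SpecialLinearGroup.transvection hj a * g₂ := by
      apply Subtype.ext
      simp only [Matrix.SpecialLinearGroup.coe_mul]
      rw [transvection_coe_vec, en]
      have : (1 + vecMulVec (Pi.single p 1) (Pi.single j a)) * (1 + vecMulVec (Pi.single p 1) c) =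
          1 + vecMulVec (Pi.single p 1) (Pi.single j a ᵥ* (g₂ : Matrix ι ι ℤ)) := by
        rw [mul_add, mul_one, add_mul, one_mul, vecMulVec_mul_vecMulVec, hc, vecMulVec_sub]
        simp [hj.symm]
      rw [mul_assoc, this, mul_add, mul_one, mul_vecMulVec, hcol, add_mul, one_mul, vecMulVec_mul]
    have hnq : QuotientGroup.mk' N n = 1 := (QuotientGroup.eq_one_iff n).2 hn
    rw [← key, map_mul _ _ n, hnq, mul_one]
  have hCE : HasElem C 1 := by
    intro i j hij a
    rw [one_mul]
    by_cases hi : i = p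
    · subst hi; exact hC2 j hij a
    by_cases hj : j = p
    · subst hj; exact hC1 i hij a
    have hpj : p ≠ j := Ne.symm hj
    rw [← mul_one a, ← transvection_commutator hij hi hpj, commutatorElement_def]
    exact C.mul_mem (C.mul_mem (C.mul_mem (hC1 i hi a) (hC2 j hpj 1))
      (C.inv_mem (hC1 i hi a))) (C.inv_mem (hC2 j hpj 1))
  rw [Subgroup.mem_center_iff]
  intro z
  obtain ⟨z, rfl⟩ := QuotientGroup.mk'_surjective N z
  have := (hCmem z).1 (hCE.mem_of_one z)
  rw [map_mul, map_mul] at this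
  exact this.symm

/-- Modulo a normal subgroup `N` containing the elementary matrices of level `q`, an element of
the congruence subgroup of level `q²` is represented by a matrix `g₂ ≡ 1 (mod q)` whose `p`-th
row and column are trivial; hence its image is central. -/
lemma HasElem.mk_mem_center {N : Subgroup (SpecialLinearGroup ι ℤ)} [N.Normal] {q : ℕ}
    (hN : HasElem N q) {p i₀ i₁ : ι} (h0 : i₀ ≠ p) (h1 : i₁ ≠ p) (h01 : i₀ ≠ i₁)
    {g : SpecialLinearGroup ι ℤ} (hg : g ∈ Cong ι (q * q)) :
    QuotientGroup.mk' N g ∈ Subgroup.center (SpecialLinearGroup ι ℤ ⧸ N) := by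
  obtain ⟨h, hh, e⟩ : ∃ h ∈ N ⊓ Cong ι q,
      (h : Matrix ι ι ℤ) *ᵥ ((g : Matrix ι ι ℤ) *ᵥ Pi.single p 1) = Pi.single p 1 := by
    have hgp := fun i => mem_Cong.1 hg i p
    choose t ht using hgp
    refine hN.inf_Cong.exists_mulVec_eq h0 h1 h01 ((↑g⁻¹ : Matrix ι ι ℤ) p) _ t ?_ ?_
    · have hinv : (↑g⁻¹ : Matrix ι ι ℤ) * (↑g : Matrix ι ι ℤ) = 1 := by
        rw [← Matrix.SpecialLinearGroup.coe_mul, inv_mul_cancel,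
          Matrix.SpecialLinearGroup.coe_one]
      have := congrFun (congrFun hinv p) p
      rw [one_apply_eq, Matrix.mul_apply] at this
      rw [mulVec_single_one]
      exact this
    · intro i
      have := ht i
      rw [mulVec_single_one, col_apply]
      push_cast at this
      rw [← this]
      simp [Matrix.one_apply, Pi.single_apply]
  set g₁ := h * g with hg₁
  have hg₁C : g₁ ∈ Cong ι q := by
    refine (Cong ι q).mul_mem hh.2 (mem_Cong.2 fun i j => ?_)
    exact dvd_trans (by push_cast; exact dvd_mul_right _ _) (mem_Cong.1 hg i j)
  have e₁ : (g₁ : Matrix ι ι ℤ) *ᵥ Pi.single p 1 = Pi.single p 1 := by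
    rw [hg₁, Matrix.SpecialLinearGroup.coe_mul, ← mulVec_mulVec, e]
  have hpp : (g₁ : Matrix ι ι ℤ) p p = 1 := by
    have := congrFun e₁ p
    rw [mulVec_single_one] at this
    simpa using this
  set x : ι → ℤ := Pi.single p 1 - (g₁ : Matrix ι ι ℤ) p with hx
  have hxp : x p = 0 := by simp [hx, hpp]
  obtain ⟨h', hh', e'⟩ := hN.inf_Cong.row p x hxp (fun j => by
    have := mem_Cong.1 hg₁C p j
    rw [← dvd_neg] at this
    have e : x j = -((g₁ : Matrix ι ι ℤ) p j - (1 : Matrix ι ι ℤ) p j) := by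
      rw [hx, Pi.sub_apply, Matrix.one_apply, Pi.single_apply, neg_sub]
      simp only [eq_comm]
    rwa [e])
  set g₂ := g₁ * h' with hg₂
  have hg₂C : g₂ ∈ Cong ι q := (Cong ι q).mul_mem hg₁C hh'.2
  have hM : (g₂ : Matrix ι ι ℤ) = g₁ + vecMulVec (Pi.single p 1) x := by
    rw [hg₂, Matrix.SpecialLinearGroup.coe_mul, e', mul_add, mul_one, mul_vecMulVec, e₁]
  have hcol : (g₂ : Matrix ι ι ℤ) *ᵥ Pi.single p 1 = Pi.single p 1 := by
    rw [hM, add_mulVec, e₁, vecMulVec_mulVec]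
    simp [hxp]
  have hrow : Pi.single p 1 ᵥ* (g₂ : Matrix ι ι ℤ) = Pi.single p 1 := by
    rw [hM]
    ext y
    simp [vecMulVec_apply, hx]
  have hmk : QuotientGroup.mk' N g = QuotientGroup.mk' N g₂ := by
    have a1 : QuotientGroup.mk' N h = 1 := (QuotientGroup.eq_one_iff h).2 hh.1
    have a2 : QuotientGroup.mk' N h' = 1 := (QuotientGroup.eq_one_iff h').2 hh'.1
    rw [hg₂, hg₁, map_mul, map_mul, a1, a2, one_mul, mul_one]
  rw [hmk]
  exact hN.mk_mem_center_of_block hg₂C hcol hrow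

/-- Schur: a perfect group whose centre has finite index is finite. -/
lemma finite_of_perfect {Q : Type*} [Group Q] [(Subgroup.center Q).FiniteIndex]
    (hQ : commutator Q = ⊤) : Finite Q := by
  have hfin : Finite (commutatorSet Q) := by
    refine Set.Finite.subset (Set.finite_range
      (fun x : (Q ⧸ Subgroup.center Q) × (Q ⧸ Subgroup.center Q) => ⁅x.1.out, x.2.out⁆)) ?_
    rintro _ ⟨a, b, rfl⟩
    refine ⟨(a, b), ?_⟩
    obtain ⟨z, hz⟩ := QuotientGroup.mk_out_eq_mul (Subgroup.center Q) a
    obtain ⟨w, hw⟩ := QuotientGroup.mk_out_eq_mul (Subgroup.center Q) b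
    have hz' := Subgroup.mem_center_iff.1 z.2
    have hw' := Subgroup.mem_center_iff.1 w.2
    dsimp only
    rw [hz, hw, commutatorElement_def, commutatorElement_def]
    calc a * z * (b * w) * (a * z)⁻¹ * (b * w)⁻¹
        = a * (z * (b * w)) * (z : Q)⁻¹ * (a⁻¹ * (w : Q)⁻¹) * b⁻¹ := by group
      _ = a * ((b * w) * z) * (z : Q)⁻¹ * (a⁻¹ * (w : Q)⁻¹) * b⁻¹ := by rw [hz']
      _ = a * b * (w * a⁻¹) * (w : Q)⁻¹ * b⁻¹ := by group
      _ = a * b * (a⁻¹ * w) * (w : Q)⁻¹ * b⁻¹ := by rw [hw']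
      _ = a * b * a⁻¹ * b⁻¹ := by group
  have : Finite (commutator Q) := inferInstance
  rw [hQ] at this
  exact Finite.of_equiv _ (Subgroup.topEquiv (G := Q)).toEquiv

/-- A normal subgroup containing the elementary matrices of a level `q ≠ 0` has finite index: the
quotient is perfect, and the congruence subgroup of level `q²` has central image in it. -/
lemma HasElem.finiteIndex {N : Subgroup (SpecialLinearGroup ι ℤ)} [N.Normal] {q : ℕ}
    (hq : q ≠ 0) (hN : HasElem N q) (hι : ∀ k l : ι, ∃ p, p ≠ k ∧ p ≠ l)
    {p i₀ i₁ : ι} (h0 : i₀ ≠ p) (h1 : i₁ ≠ p) (h01 : i₀ ≠ i₁) : N.FiniteIndex := by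
  have hNe : NeZero (q * q) := ⟨mul_ne_zero hq hq⟩
  have hle : Cong ι (q * q) ≤
      (Subgroup.center (SpecialLinearGroup ι ℤ ⧸ N)).comap (QuotientGroup.mk' N) :=
    fun g hg => hN.mk_mem_center h0 h1 h01 hg
  have hCf : (Cong ι (q * q)).FiniteIndex := by
    unfold Cong
    infer_instance
  have hcf := Subgroup.finiteIndex_of_le hle
  have hcenter : (Subgroup.center (SpecialLinearGroup ι ℤ ⧸ N)).FiniteIndex := by
    refine ⟨?_⟩
    rw [← Subgroup.index_comap_of_surjective _ (QuotientGroup.mk'_surjective N)]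
    exact hcf.index_ne_zero
  have hperf : HasElem ((commutator (SpecialLinearGroup ι ℤ ⧸ N)).comap (QuotientGroup.mk' N))
      1 := by
    intro i j hij a
    obtain ⟨l, hli, hlj⟩ := hι i j
    rw [one_mul, ← mul_one a, ← transvection_commutator hij hli.symm hlj, Subgroup.mem_comap,
      map_commutatorElement]
    exact Subgroup.commutator_mem_commutator (Subgroup.mem_top _) (Subgroup.mem_top _)
  have hfin : Finite (SpecialLinearGroup ι ℤ ⧸ N) := by
    refine finite_of_perfect (eq_top_iff.2 fun z _ => ?_)
    obtain ⟨z, rfl⟩ := QuotientGroup.mk'_surjective N z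
    exact hperf.mem_of_one z
  exact Subgroup.finiteIndex_of_finite_quotient

end BlockUnipotent

/-- For `n ≥ 3`, `1 ≤ m < n`, `k ≥ 1`, the subgroup of `SL_n(ℤ)` generated by
`U⁺(kℤ)` (matrices `I + X` with `X` supported in the top-right `m × (n-m)` block, entries
divisible by `k`) and `U⁻(kℤ)` (the analogous bottom-left block) has finite index. -/
theorem block_unipotent_generators_finite_index (n m k : ℕ)
    (hn : 3 ≤ n) (hm : 1 ≤ m) (hmn : m < n) (hk : 1 ≤ k) :
    (Subgroup.closure
      ({g : Matrix.SpecialLinearGroup (Fin n) ℤ |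
          ∀ i j : Fin n, if i = j then g.1 i j = 1
            else if (i : ℕ) < m ∧ m ≤ (j : ℕ) then (k : ℤ) ∣ g.1 i j
            else g.1 i j = 0} ∪
       {g : Matrix.SpecialLinearGroup (Fin n) ℤ |
          ∀ i j : Fin n, if i = j then g.1 i j = 1
            else if m ≤ (i : ℕ) ∧ (j : ℕ) < m then (k : ℤ) ∣ g.1 i j
            else g.1 i j = 0})).FiniteIndex := by
  set Γ : Subgroup (Matrix.SpecialLinearGroup (Fin n) ℤ) := Subgroup.closure (_ ∪ _)
  have hup : ∀ (i j : Fin n) (hij : i ≠ j) (a : ℤ), (i : ℕ) < m → m ≤ (j : ℕ) →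
      Matrix.SpecialLinearGroup.transvection hij (k * a) ∈ Γ := by
    intro i j hij a hi hj
    refine Subgroup.subset_closure (Or.inl fun x y => ?_)
    clear Γ
    change if x = y then (1 + Matrix.single i j (k * a) : Matrix _ _ ℤ) x y = 1 else
      if _ then (k : ℤ) ∣ (1 + Matrix.single i j (k * a) : Matrix _ _ ℤ) x y else
        (1 + Matrix.single i j (k * a) : Matrix _ _ ℤ) x y = 0
    simp only [Matrix.add_apply, Matrix.one_apply, Matrix.single_apply]
    split_ifs <;> first | (simp; done) | grind
  have hlow : ∀ (i j : Fin n) (hij : i ≠ j) (a : ℤ), m ≤ (i : ℕ) → (j : ℕ) < m →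
      Matrix.SpecialLinearGroup.transvection hij (k * a) ∈ Γ := by
    intro i j hij a hi hj
    refine Subgroup.subset_closure (Or.inr fun x y => ?_)
    clear hup Γ
    change if x = y then (1 + Matrix.single i j (k * a) : Matrix _ _ ℤ) x y = 1 else
      if _ then (k : ℤ) ∣ (1 + Matrix.single i j (k * a) : Matrix _ _ ℤ) x y else
        (1 + Matrix.single i j (k * a) : Matrix _ _ ℤ) x y = 0
    simp only [Matrix.add_apply, Matrix.one_apply, Matrix.single_apply]
    split_ifs <;> first | (simp; done) | grind
  -- inside a diagonal block, commute through an index of the other block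
  have hcomm : ∀ x ∈ Γ, ∀ y ∈ Γ, x * y * x⁻¹ * y⁻¹ ∈ Γ := fun x hx y hy =>
    Γ.mul_mem (Γ.mul_mem (Γ.mul_mem hx hy) (Γ.inv_mem hx)) (Γ.inv_mem hy)
  have hE : BlockUnipotent.HasElem Γ ((k : ℤ) * k) := by
    intro i j hij a
    rcases lt_or_ge (i : ℕ) m with hi | hi <;> rcases lt_or_ge (j : ℕ) m with hj | hj
    · have hil : i ≠ ⟨m, hmn⟩ := fun h => by simp [h] at hi
      have hlj : (⟨m, hmn⟩ : Fin n) ≠ j := fun h => by simp [← h] at hj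
      have e : (k : ℤ) * k * a = (k * a) * (k * 1) := by ring
      rw [e, ← BlockUnipotent.transvection_commutator hij hil hlj, commutatorElement_def]
      exact hcomm _ (hup _ _ _ _ hi le_rfl) _ (hlow _ _ _ _ le_rfl hj)
    · rw [mul_assoc]; exact hup _ _ _ _ hi hj
    · rw [mul_assoc]; exact hlow _ _ _ _ hi hj
    · have hil : i ≠ ⟨0, by omega⟩ := fun h => by simp [h] at hi; omega
      have hlj : (⟨0, by omega⟩ : Fin n) ≠ j := fun h => by simp [← h] at hj; omega
      have e : (k : ℤ) * k * a = (k * a) * (k * 1) := by ring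
      rw [e, ← BlockUnipotent.transvection_commutator hij hil hlj, commutatorElement_def]
      exact hcomm _ (hlow i _ hil a hi (Nat.lt_of_lt_of_le zero_lt_one hm)) _
        (hup _ j hlj 1 (Nat.lt_of_lt_of_le zero_lt_one hm) hj)
  have hι : ∀ x y : Fin n, ∃ p, p ≠ x ∧ p ≠ y := by
    intro x y
    have : ({x, y} : Finset (Fin n)).card < Fintype.card (Fin n) :=
      lt_of_le_of_lt Finset.card_le_two (by rw [Fintype.card_fin]; omega)
    obtain ⟨p, hp⟩ := Finset.exists_mem_notMem_of_card_lt_card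
      (s := {x, y}) (t := Finset.univ) (by simpa using this)
    exact ⟨p, by simpa using hp⟩
  have hcore : BlockUnipotent.HasElem Γ.normalCore ((k * k * (k * k) : ℕ) : ℤ) := by
    intro i j hij a b
    push_cast
    exact hE.conj_mem hι b hij a
  have hfin : Γ.normalCore.FiniteIndex :=
    hcore.finiteIndex (by positivity) hι (p := ⟨0, by omega⟩) (i₀ := ⟨1, by omega⟩)
      (i₁ := ⟨2, by omega⟩) (by simp) (by simp) (by simp)
  exact Subgroup.finiteIndex_of_le Γ.normalCore_le
end

section
/- Let n ≥ 3, let r ≥ 2, and let n = n₁ + ⋯ + n_r be an ordered partition of n into positive integers; let k ≥ 1. Partition the index set {1,…,n} into consecutive blocks B₁,…,B_r of sizes n₁,…,n_r. Let U_Q⁺(kℤ) be the set of matrices in SL_n(ℤ) of the form I + X where X i j = 0 unless i ∈ B_s and j ∈ B_t with s < t, and all entries of X are divisible by k; let U_Q⁻(kℤ) be the analogous set with s > t. Then the subgroup of SL_n(ℤ) generated by U_Q⁺(kℤ) and U_Q⁻(kℤ) has finite index in SL_n(ℤ). -/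
/-!
The proof shows that a subgroup `Γ` of `SL_n(ℤ)`, `n ≥ 3`, containing all elementary matrices
`I + a E_{ij}` with `m ∣ a`, for some `m ≥ 1` (`HasLevel Γ m`), has finite index. The group
generated by `U_Q⁺(kℤ)` and `U_Q⁻(kℤ)` has this property for `m = k²`: if `i` and `j` lie in the
same block, then `I + k² c E_{ij}` is the commutator of `I + k E_{il}` and `I + k c E_{lj}` for any
`l` in another block.

Everything rests on rank-one unipotents `I + u vᵀ` with `v ⬝ᵥ u = 0` (`rankOne u v`). For fixed `u`
they depend additively on `v`, and if `u` is unimodular then `v` is a combination of the Koszul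
vectors `u_k e_j - u_j e_k` (`eq_sum_koszul`). Such a vector vanishes at a third index `l`, so the
corresponding rank-one unipotent is a commutator `[I + u' e_lᵀ, I + e_l xᵀ]` times a matrix
`I + e_l yᵀ` (`rankOne_eq_commutator_mul`). This is Suslin's trick, and it is used twice.

* Splitting `m² = m · m` over the commutator shows that `Γ` contains every `SL_n(ℤ)`-conjugate of an
  elementary matrix of level `m²` (`HasLevel.rankOne_mem`). Hence `Γ` contains the normal closure
  `N` of these matrices.
* If `A ≡ I` modulo `q`, where `q = m²`, then the same decomposition of `A (I + t E_{ij}) A⁻¹` shows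
  that `A` commutes with `I + t E_{ij}` modulo `N` (`HasLevel.mk_conj`).

By Euclid's algorithm elementary matrices generate `SL_n(ℤ)` (`HasLevel.mem_of_one`). Therefore the
image of the principal congruence subgroup of level `q` is central in `SL_n(ℤ) / N`, so the centre
has finite index; and `SL_n(ℤ) / N` is perfect, because elementary matrices are commutators for
`n ≥ 3`. By Schur's theorem the commutator subgroup of a group with centre of finite index is
finite, so `SL_n(ℤ) / N` is finite and `N ≤ Γ` has finite index.
-/

namespace ParabolicUnipotent

open Matrix
open scoped commutatorElement

variable {n : ℕ}

/-! ### Rank-one unipotent matrices -/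

/-- The unipotent matrix `I + u vᵀ`, for `v ⬝ᵥ u = 0`, as an element of `SL_n(ℤ)`; it is set
to `1` when `v ⬝ᵥ u ≠ 0`. -/
def rankOne (u v : Fin n → ℤ) : SpecialLinearGroup (Fin n) ℤ :=
  if h : v ⬝ᵥ u = 0 then
    ⟨1 + vecMulVec u v, by
      rw [vecMulVec_eq Unit, det_one_add_replicateCol_mul_replicateRow, h, add_zero]⟩
  else 1

/-- The `i`-th standard basis vector. -/
abbrev basisVec (i : Fin n) : Fin n → ℤ := Pi.single i 1

lemma coe_ext {A B : SpecialLinearGroup (Fin n) ℤ}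
    (h : (A : Matrix (Fin n) (Fin n) ℤ) = (B : Matrix (Fin n) (Fin n) ℤ)) : A = B :=
  Subtype.ext h

lemma rankOne_coe {u v : Fin n → ℤ} (h : v ⬝ᵥ u = 0) :
    (rankOne u v : Matrix (Fin n) (Fin n) ℤ) = 1 + vecMulVec u v := by
  simp [rankOne, h]

lemma rankOne_zero_right (u : Fin n → ℤ) : rankOne u 0 = 1 := by
  apply coe_ext
  rw [rankOne_coe (by simp)]
  simp

lemma rankOne_zero_left (v : Fin n → ℤ) : rankOne 0 v = 1 := by
  apply coe_ext
  rw [rankOne_coe (by simp)]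
  simp

lemma rankOne_add_right {u v w : Fin n → ℤ} (hv : v ⬝ᵥ u = 0) (hw : w ⬝ᵥ u = 0) :
    rankOne u (v + w) = rankOne u v * rankOne u w := by
  apply coe_ext
  rw [Matrix.SpecialLinearGroup.coe_mul, rankOne_coe (by simp [add_dotProduct, hv, hw]),
    rankOne_coe hv, rankOne_coe hw]
  simp only [mul_add, add_mul, one_mul, mul_one, vecMulVec_mul_vecMulVec, hv, vecMulVec_add,
    zero_smul, vecMulVec_zero]
  abel

lemma rankOne_add_left {u u' v : Fin n → ℤ} (h : v ⬝ᵥ u = 0) (h' : v ⬝ᵥ u' = 0) :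
    rankOne (u + u') v = rankOne u v * rankOne u' v := by
  apply coe_ext
  rw [Matrix.SpecialLinearGroup.coe_mul, rankOne_coe (by simp [dotProduct_add, h, h']),
    rankOne_coe h, rankOne_coe h']
  simp only [mul_add, add_mul, one_mul, mul_one, vecMulVec_mul_vecMulVec, h', add_vecMulVec,
    zero_smul, vecMulVec_zero]
  abel

lemma rankOne_smul {u v : Fin n → ℤ} (c : ℤ) (h : v ⬝ᵥ u = 0) :
    rankOne (c • u) v = rankOne u (c • v) := by
  apply coe_ext
  rw [rankOne_coe (by rw [dotProduct_smul, h, smul_zero]),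
    rankOne_coe (by rw [smul_dotProduct, h, smul_zero]), smul_vecMulVec, vecMulVec_smul]

lemma rankOne_conj (g : SpecialLinearGroup (Fin n) ℤ) {u v : Fin n → ℤ} (h : v ⬝ᵥ u = 0) :
    g * rankOne u v * g⁻¹ =
      rankOne ((g : Matrix (Fin n) (Fin n) ℤ) *ᵥ u)
        (v ᵥ* ((g⁻¹ : SpecialLinearGroup (Fin n) ℤ) : Matrix (Fin n) (Fin n) ℤ)) := by
  have hg : ((g⁻¹ : SpecialLinearGroup (Fin n) ℤ) : Matrix (Fin n) (Fin n) ℤ) *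
      (g : Matrix (Fin n) (Fin n) ℤ) = 1 := by
    rw [← Matrix.SpecialLinearGroup.coe_mul, inv_mul_cancel, Matrix.SpecialLinearGroup.coe_one]
  have hg' : (g : Matrix (Fin n) (Fin n) ℤ) *
      ((g⁻¹ : SpecialLinearGroup (Fin n) ℤ) : Matrix (Fin n) (Fin n) ℤ) = 1 := by
    rw [← Matrix.SpecialLinearGroup.coe_mul, mul_inv_cancel, Matrix.SpecialLinearGroup.coe_one]
  apply coe_ext
  rw [rankOne_coe, Matrix.SpecialLinearGroup.coe_mul, Matrix.SpecialLinearGroup.coe_mul, rankOne_coe h,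
    mul_add, add_mul, mul_one, hg', mul_vecMulVec, vecMulVec_mul]
  rw [← dotProduct_mulVec, mulVec_mulVec, hg, one_mulVec, h]

/-- A rank-one unipotent `I + u vᵀ` whose column and row vectors both vanish at a common index
`l` is a commutator of `I + u e_lᵀ` and `I + e_l vᵀ`. -/
lemma rankOne_commutator {u v : Fin n → ℤ} {l : Fin n} (h : v ⬝ᵥ u = 0) (hu : u l = 0)
    (hv : v l = 0) :
    ⁅rankOne u (basisVec l), rankOne (basisVec l) v⁆ = rankOne u v := by
  have h1 : basisVec l ⬝ᵥ u = 0 := by simp [hu]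
  have h2 : v ⬝ᵥ basisVec l = 0 := by simp [hv]
  rw [commutatorElement_def, mul_inv_eq_iff_eq_mul, mul_inv_eq_iff_eq_mul]
  apply coe_ext
  simp only [Matrix.SpecialLinearGroup.coe_mul]
  rw [rankOne_coe h, rankOne_coe h1, rankOne_coe h2]
  have h3 : basisVec l ⬝ᵥ basisVec l = (1 : ℤ) := by simp
  simp only [mul_add, add_mul, one_mul, mul_one, vecMulVec_mul_vecMulVec, h, h2, h3,
    zero_smul, one_smul, vecMulVec_zero, add_zero]
  abel

lemma rankOne_sum_right_mem (H : Subgroup (SpecialLinearGroup (Fin n) ℤ)) {ι : Type*}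
    (s : Finset ι) (u : Fin n → ℤ) (w : ι → Fin n → ℤ) (h0 : ∀ j ∈ s, w j ⬝ᵥ u = 0)
    (h : ∀ j ∈ s, rankOne u (w j) ∈ H) : rankOne u (∑ j ∈ s, w j) ∈ H := by
  classical
  induction s using Finset.induction_on with
  | empty => simp [rankOne_zero_right, H.one_mem]
  | insert a s ha ih =>
    rw [Finset.sum_insert ha, rankOne_add_right (h0 _ (by simp))]
    · exact H.mul_mem (h _ (by simp)) (ih (fun j hj => h0 j (by simp [hj]))
        (fun j hj => h j (by simp [hj])))
    · rw [sum_dotProduct]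
      exact Finset.sum_eq_zero fun j hj => h0 j (by simp [hj])

lemma rankOne_sum_left_mem (H : Subgroup (SpecialLinearGroup (Fin n) ℤ)) {ι : Type*}
    (s : Finset ι) (v : Fin n → ℤ) (w : ι → Fin n → ℤ) (h0 : ∀ j ∈ s, v ⬝ᵥ w j = 0)
    (h : ∀ j ∈ s, rankOne (w j) v ∈ H) : rankOne (∑ j ∈ s, w j) v ∈ H := by
  classical
  induction s using Finset.induction_on with
  | empty => simp [rankOne_zero_left, H.one_mem]
  | insert a s ha ih =>
    rw [Finset.sum_insert ha, rankOne_add_left (h0 _ (by simp))]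
    · exact H.mul_mem (h _ (by simp)) (ih (fun j hj => h0 j (by simp [hj]))
        (fun j hj => h j (by simp [hj])))
    · rw [dotProduct_sum]
      exact Finset.sum_eq_zero fun j hj => h0 j (by simp [hj])

/-! ### Subgroups containing the elementary matrices of a given level -/

/-- `H` contains every elementary matrix `I + a E_{ij}`, `i ≠ j`, with `m ∣ a`. -/
def HasLevel (H : Subgroup (SpecialLinearGroup (Fin n) ℤ)) (m : ℤ) : Prop :=
  ∀ i j : Fin n, i ≠ j → ∀ a : ℤ, m ∣ a → rankOne (basisVec i) (Pi.single j a) ∈ H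

lemma HasLevel.row_mem {H : Subgroup (SpecialLinearGroup (Fin n) ℤ)} {m : ℤ}
    (hH : HasLevel H m) {l : Fin n} {x : Fin n → ℤ} (hl : x l = 0) (hx : ∀ j, m ∣ x j) :
    rankOne (basisVec l) x ∈ H := by
  rw [← Finset.univ_sum_single x]
  apply rankOne_sum_right_mem
  · intro j _
    by_cases h : j = l
    · subst h; simp [hl]
    · simp [h]
  · intro j _
    by_cases h : j = l
    · subst h; simp [hl, rankOne_zero_right, H.one_mem]
    · exact hH l j (Ne.symm h) _ (hx j)

lemma HasLevel.col_mem {H : Subgroup (SpecialLinearGroup (Fin n) ℤ)} {m : ℤ}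
    (hH : HasLevel H m) {l : Fin n} {y : Fin n → ℤ} (hl : y l = 0) (hy : ∀ j, m ∣ y j) :
    rankOne y (basisVec l) ∈ H := by
  rw [← Finset.univ_sum_single y]
  apply rankOne_sum_left_mem
  · intro j _
    by_cases h : j = l
    · subst h; simp [hl]
    · simp [Ne.symm h]
  · intro j _
    by_cases h : j = l
    · subst h; simp [hl, rankOne_zero_left, H.one_mem]
    · have h1 : (Pi.single j (y j) : Fin n → ℤ) = y j • basisVec j := by
        rw [← Pi.single_smul]; simp
      have h2 : y j • basisVec l = (Pi.single l (y j) : Fin n → ℤ) := by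
        rw [← Pi.single_smul]; simp
      rw [h1, rankOne_smul _ (by simp [Ne.symm h]), h2]
      exact hH j l h _ (hy j)

lemma exists_third (hn : 3 ≤ n) (i j : Fin n) : ∃ l : Fin n, l ≠ i ∧ l ≠ j := by
  obtain ⟨l, hl⟩ : ∃ l, l ∉ ({i, j} : Finset (Fin n)) := by
    by_contra! h
    have h1 : (Finset.univ : Finset (Fin n)) ⊆ {i, j} := fun l _ => h l
    have h2 := (Finset.card_le_card h1).trans Finset.card_le_two
    simp at h2
    omega
  exact ⟨l, by simpa using hl⟩

/-- The part of `u` away from the index `l`. -/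
def away (u : Fin n → ℤ) (l : Fin n) : Fin n → ℤ := u - u l • basisVec l

lemma away_self (u : Fin n → ℤ) (l : Fin n) : away u l l = 0 := by simp [away]

lemma dotProduct_away {u x : Fin n → ℤ} {l : Fin n} (hx : x l = 0) (h : x ⬝ᵥ u = 0) :
    x ⬝ᵥ away u l = 0 := by
  rw [away, dotProduct_sub, dotProduct_smul, h]
  simp [hx]

/-- If the row vector `x` vanishes at `l`, then `I + u xᵀ` is a commutator times an explicit
matrix supported on the `l`-th row. -/
lemma rankOne_eq_commutator_mul {u x : Fin n → ℤ} {l : Fin n} (hx : x l = 0)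
    (h : x ⬝ᵥ u = 0) :
    rankOne u x = ⁅rankOne (away u l) (basisVec l), rankOne (basisVec l) x⁆ *
      rankOne (basisVec l) (u l • x) := by
  rw [rankOne_commutator (dotProduct_away hx h) (away_self u l) hx,
    ← rankOne_smul _ (by simp [hx]), ← rankOne_add_left (dotProduct_away hx h)
      (by rw [dotProduct_smul]; simp [hx])]
  rw [away, sub_add_cancel]

/-- The Koszul vector `u_k e_j - u_j e_k`, which is orthogonal to `u`. -/
def koszul (u : Fin n → ℤ) (j k : Fin n) : Fin n → ℤ := u k • basisVec j - u j • basisVec k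

lemma koszul_dotProduct (u : Fin n → ℤ) (j k : Fin n) : koszul u j k ⬝ᵥ u = 0 := by
  rw [koszul, sub_dotProduct, smul_dotProduct, smul_dotProduct]
  simp [mul_comm]

lemma koszul_apply_ne (u : Fin n → ℤ) {j k l : Fin n} (hj : l ≠ j) (hk : l ≠ k) :
    koszul u j k l = 0 := by
  simp [koszul, hj, hk]

/-- Exactness of the Koszul complex at a unimodular vector `u`: every `v` orthogonal to `u` is a
combination of Koszul vectors. -/
lemma eq_sum_koszul {u v w : Fin n → ℤ} (hw : w ⬝ᵥ u = 1) (hv : v ⬝ᵥ u = 0) :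
    v = ∑ p : Fin n × Fin n, (v p.1 * w p.2) • koszul u p.1 p.2 := by
  rw [Fintype.sum_prod_type]
  ext i
  simp only [koszul, Finset.sum_apply, Pi.smul_apply, Pi.sub_apply, smul_eq_mul, Pi.single_apply,
    mul_sub, mul_ite, mul_one, mul_zero, Finset.sum_sub_distrib]
  have h1 : ∑ x, ∑ y, (if i = x then v x * w y * u y else 0) = v i := by
    rw [Finset.sum_comm]
    simp only [Finset.sum_ite_eq, Finset.mem_univ, if_true, mul_assoc, ← Finset.mul_sum]
    rw [show ∑ y, w y * u y = 1 from hw, mul_one]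
  have h2 : ∑ x, ∑ y, (if i = y then v x * w y * u x else 0) = 0 := by
    simp only [Finset.sum_ite_eq, Finset.mem_univ, if_true]
    have : ∀ x, v x * w i * u x = w i * (v x * u x) := fun x => by ring
    simp only [this, ← Finset.mul_sum]
    rw [show ∑ y, v y * u y = 0 from hv, mul_zero]
  rw [h1, h2, sub_zero]

/-- A subgroup of level `m` contains `I + a u vᵀ` for every unimodular `u`, every `v` orthogonal
to `u`, and every `a` divisible by `m²`. -/
lemma HasLevel.rankOne_mem {H : Subgroup (SpecialLinearGroup (Fin n) ℤ)} {m : ℤ}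
    (hH : HasLevel H m) (hn : 3 ≤ n) {u v w : Fin n → ℤ} (hw : w ⬝ᵥ u = 1) (hv : v ⬝ᵥ u = 0)
    {a : ℤ} (ha : m * m ∣ a) : rankOne u (a • v) ∈ H := by
  obtain ⟨c, rfl⟩ := ha
  rw [eq_sum_koszul hw hv, Finset.smul_sum]
  apply rankOne_sum_right_mem
  · rintro ⟨j, k⟩ _
    simp only [smul_dotProduct, koszul_dotProduct, smul_zero]
  · rintro ⟨j, k⟩ _
    obtain ⟨l, hlj, hlk⟩ := exists_third hn j k
    have hl := koszul_apply_ne u hlj hlk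
    have hu := koszul_dotProduct u j k
    -- one factor `m` goes to each of the two matrices of the commutator
    set x := (c * (v j * w k)) • koszul u j k with hx
    have hxl : x l = 0 := by simp [hx, hl]
    have hxu : x ⬝ᵥ u = 0 := by rw [hx, smul_dotProduct, hu, smul_zero]
    have e : (m * m * c) • (v j * w k) • koszul u j k = m • m • x := by
      simp only [hx, smul_smul]; congr 1; ring
    simp only [e]
    have hxa := dotProduct_away hxl hxu
    have hmxl : (m • x) l = 0 := by simp [hxl]
    have hmmxl : (m • m • x) l = 0 := by simp [hxl]
    have hmxa : (m • x) ⬝ᵥ away u l = 0 := by rw [smul_dotProduct, hxa, smul_zero]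
    have hmmxu : (m • m • x) ⬝ᵥ u = 0 := by
      rw [smul_dotProduct, smul_dotProduct, hxu, smul_zero, smul_zero]
    rw [rankOne_eq_commutator_mul hmmxl hmmxu,
      rankOne_commutator (dotProduct_away hmmxl hmmxu) (away_self u l) hmmxl,
      ← rankOne_smul _ hmxa,
      ← rankOne_commutator (l := l) (by rw [dotProduct_smul, hmxa, smul_zero])
        (by simp [away_self]) hmxl]
    have h1 : rankOne (m • away u l) (basisVec l) ∈ H :=
      hH.col_mem (by simp [away_self]) (fun i => ⟨away u l i, by simp⟩)
    have h2 : rankOne (basisVec l) (m • x) ∈ H :=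
      hH.row_mem (by simp [hxl]) (fun i => ⟨x i, by simp⟩)
    have h3 : rankOne (basisVec l) (u l • m • m • x) ∈ H :=
      hH.row_mem (by simp [hxl]) (fun i => ⟨u l * (m * x i), by simp; ring⟩)
    rw [commutatorElement_def]
    exact H.mul_mem (H.mul_mem (H.mul_mem (H.mul_mem h1 h2) (H.inv_mem h1)) (H.inv_mem h2)) h3

/-! ### Congruence subgroups are central modulo a normal subgroup of level `q` -/

section Normal

variable {N : Subgroup (SpecialLinearGroup (Fin n) ℤ)} [N.Normal]

lemma HasLevel.rankOne_mem_of_normal {q : ℤ} (hN : HasLevel N q) {u x : Fin n → ℤ} {l : Fin n}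
    (hx : x l = 0) (h : x ⬝ᵥ u = 0) (hq : ∀ p, q ∣ x p) : rankOne u x ∈ N := by
  rw [rankOne_eq_commutator_mul hx h, commutatorElement_def]
  have h1 : rankOne (basisVec l) x ∈ N := hN.row_mem hx hq
  have h2 : rankOne (basisVec l) (u l • x) ∈ N :=
    hN.row_mem (by simp [hx]) (fun p => by simpa using (hq p).mul_left (u l))
  exact N.mul_mem (N.mul_mem (‹N.Normal›.conj_mem _ h1 _) (N.inv_mem h1)) h2

/-- Let `u, v, w` be congruent to `e_i, e_j, e_i` modulo `q`, with `v ⬝ᵥ u = 0` and `w ⬝ᵥ u = 1`.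
Then `I + t u vᵀ` is congruent to the elementary matrix `I + t E_{ij}` modulo `N`. All Koszul
terms of `v` except the one of index `(j, i)` have coefficients divisible by `q` and contribute
elements of `N`; the remaining term is evaluated through its commutator expression. -/
lemma HasLevel.mk_rankOne {q : ℕ} (hN : HasLevel N q) (hn : 3 ≤ n) {u v w : Fin n → ℤ}
    (hw : w ⬝ᵥ u = 1) (hv : v ⬝ᵥ u = 0) {i j : Fin n} (hij : i ≠ j)
    (cu : ∀ p, (u p : ZMod q) = if p = i then 1 else 0)
    (cv : ∀ p, (v p : ZMod q) = if p = j then 1 else 0)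
    (cw : ∀ p, (w p : ZMod q) = if p = i then 1 else 0) (t : ℤ) :
    QuotientGroup.mk' N (rankOne u (t • v)) =
      QuotientGroup.mk' N (rankOne (basisVec i) (Pi.single j t)) := by
  have dvd_iff : ∀ a : ℤ, (q : ℤ) ∣ a ↔ (a : ZMod q) = 0 := fun a =>
    (ZMod.intCast_zmod_eq_zero_iff_dvd a q).symm
  have triv : ∀ {g}, g ∈ N → QuotientGroup.mk' N g = 1 := fun hg => by
    simpa using hg
  obtain ⟨l, hli, hlj⟩ := exists_third hn i j
  set x : Fin n → ℤ := t • (v j * w i) • koszul u j i with hx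
  have hxl : x l = 0 := by simp [hx, koszul_apply_ne u hlj hli]
  have hxu : x ⬝ᵥ u = 0 := by
    rw [hx, smul_dotProduct, smul_dotProduct, koszul_dotProduct, smul_zero, smul_zero]
  set y : Fin n → ℤ :=
    ∑ p ∈ Finset.univ.erase (j, i), t • (v p.1 * w p.2) • koszul u p.1 p.2 with hy
  have hyterm : ∀ p : Fin n × Fin n,
      (t • (v p.1 * w p.2) • koszul u p.1 p.2) ⬝ᵥ u = 0 := fun p => by
    rw [smul_dotProduct, smul_dotProduct, koszul_dotProduct, smul_zero, smul_zero]
  have hyu : y ⬝ᵥ u = 0 := by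
    rw [hy, sum_dotProduct]
    exact Finset.sum_eq_zero fun p _ => hyterm p
  have hdec : t • v = x + y := by
    conv_lhs => rw [eq_sum_koszul hw hv, Finset.smul_sum]
    exact (Finset.add_sum_erase _ (fun p : Fin n × Fin n =>
      t • (v p.1 * w p.2) • koszul u p.1 p.2) (Finset.mem_univ (j, i))).symm
  have hyN : rankOne u y ∈ N := by
    apply rankOne_sum_right_mem
    · exact fun p _ => hyterm p
    · rintro ⟨a, b⟩ hp
      obtain ⟨l', ha, hb⟩ := exists_third hn a b
      refine hN.rankOne_mem_of_normal (l := l') ?_ (hyterm _) ?_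
      · simp [koszul_apply_ne u ha hb]
      · intro p
        have hab : ¬ (a = j ∧ b = i) := by simpa using hp
        rw [dvd_iff]
        by_cases h : a = j
        · have h' : b ≠ i := fun h' => hab ⟨h, h'⟩
          simp [cw, h']
        · simp [cv, h]
  have hmain : QuotientGroup.mk' N (rankOne u x) =
      QuotientGroup.mk' N (rankOne (basisVec i) (Pi.single j t)) := by
    have e1 : QuotientGroup.mk' N (rankOne (away u l) (basisVec l)) =
        QuotientGroup.mk' N (rankOne (basisVec i) (basisVec l)) := by
      have hs : away u l = basisVec i + (away u l - basisVec i) := by abel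
      have hz : (away u l - basisVec i) l = 0 := by simp [away_self, hli]
      rw [hs, rankOne_add_left (by simp [hli]) (by rw [single_dotProduct, hz, mul_zero]), map_mul,
        triv (hN.col_mem hz ?_), mul_one]
      intro p
      rw [dvd_iff]
      by_cases hp : p = l
      · subst hp; rw [hz]; simp
      · simp [away, cu, hp, Pi.single_apply]
    have e2 : QuotientGroup.mk' N (rankOne (basisVec l) x) =
        QuotientGroup.mk' N (rankOne (basisVec l) (Pi.single j t)) := by
      have hs : x = Pi.single j t + (x - Pi.single j t) := by abel
      have hz : (x - Pi.single j t : Fin n → ℤ) l = 0 := by simp [hxl, hlj]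
      rw [hs, rankOne_add_right (by simp [hlj]) (by simp [hz]), map_mul,
        triv (hN.row_mem hz ?_), mul_one]
      intro p
      rw [dvd_iff]
      by_cases hpj : p = j
      · subst hpj
        simp [hx, koszul, cu, cv, cw, hij.symm]
      · by_cases hpi : p = i
        · subst hpi
          simp [hx, koszul, cu, hij, hij.symm]
        · simp [hx, koszul, hpi, hpj]
    have e3 : rankOne (basisVec l) (u l • x) ∈ N := by
      refine hN.row_mem (by simp [hxl]) fun p => ?_
      rw [dvd_iff]
      simp [cu, hli]
    rw [rankOne_eq_commutator_mul hxl hxu, map_mul, map_commutatorElement, e1, e2,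
      ← map_commutatorElement, rankOne_commutator (by simp [hij]) (by simp [hli])
        (by simp [hlj]), triv e3, mul_one]
  rw [hdec, rankOne_add_right hxu hyu, map_mul, hmain, triv hyN, mul_one]

/-- The image of the principal congruence subgroup of level `q` in `SL_n(ℤ) / N` commutes with
elementary matrices. -/
lemma HasLevel.mk_conj {q : ℕ} (hN : HasLevel N q) (hn : 3 ≤ n)
    {A : SpecialLinearGroup (Fin n) ℤ}
    (hA : A ∈ (Matrix.SpecialLinearGroup.map (n := Fin n) (Int.castRingHom (ZMod q))).ker)
    {i j : Fin n} (hij : i ≠ j) (t : ℤ) :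
    QuotientGroup.mk' N (A * rankOne (basisVec i) (Pi.single j t) * A⁻¹) =
      QuotientGroup.mk' N (rankOne (basisVec i) (Pi.single j t)) := by
  have entries : ∀ {B : SpecialLinearGroup (Fin n) ℤ},
      B ∈ (Matrix.SpecialLinearGroup.map (n := Fin n) (Int.castRingHom (ZMod q))).ker →
      ∀ a b, ((B a b : ℤ) : ZMod q) = if a = b then 1 else 0 := by
    intro B hB a b
    have h := congrArg (fun M : SpecialLinearGroup (Fin n) (ZMod q) => M a b)
      (MonoidHom.mem_ker.mp hB)
    simpa [Matrix.one_apply] using h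
  have hA' := entries hA
  have hAi := entries (inv_mem hA)
  have hinv : ((A⁻¹ : SpecialLinearGroup (Fin n) ℤ) : Matrix (Fin n) (Fin n) ℤ) *
      (A : Matrix (Fin n) (Fin n) ℤ) = 1 := by
    rw [← Matrix.SpecialLinearGroup.coe_mul, inv_mul_cancel, Matrix.SpecialLinearGroup.coe_one]
  have hs : (Pi.single j t : Fin n → ℤ) = t • basisVec j := by
    rw [← Pi.single_smul]; simp
  rw [rankOne_conj A (by simp [hij.symm])]
  conv_lhs => rw [hs, smul_vecMul]
  refine hN.mk_rankOne hn
    (w := basisVec i ᵥ* ((A⁻¹ : SpecialLinearGroup (Fin n) ℤ) : Matrix (Fin n) (Fin n) ℤ))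
    ?_ ?_ hij ?_ ?_ ?_ t
  · rw [← dotProduct_mulVec, mulVec_mulVec, hinv, one_mulVec]; simp
  · rw [← dotProduct_mulVec, mulVec_mulVec, hinv, one_mulVec]; simp [hij.symm]
  · intro p
    rw [mulVec_single_one]
    exact hA' p i
  · intro p
    rw [single_one_vecMul]
    simpa [eq_comm] using hAi j p
  · intro p
    rw [single_one_vecMul]
    simpa [eq_comm] using hAi i p

end Normal

/-! ### Generation of `SL_n(ℤ)` by elementary matrices -/

lemma elementary_mul_apply {a b : Fin n} (hab : a ≠ b) (t : ℤ)
    (A : SpecialLinearGroup (Fin n) ℤ) (i j : Fin n) :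
    (rankOne (basisVec a) (Pi.single b t) * A) i j =
      A i j + if i = a then t * A b j else 0 := by
  rw [Matrix.SpecialLinearGroup.coe_mul, rankOne_coe (by simp [hab.symm]), add_mul, one_mul,
    vecMulVec_mul, Matrix.add_apply, vecMulVec_apply]
  by_cases h : i = a
  · subst h; simp
  · simp [h]

/-- The columns of `A` with index outside `T` are those of the identity matrix. -/
def TrivialOutside (A : SpecialLinearGroup (Fin n) ℤ) (T : Finset (Fin n)) : Prop :=
  ∀ j ∉ T, ∀ i, A i j = if i = j then 1 else 0

lemma TrivialOutside.elementary_mul {A : SpecialLinearGroup (Fin n) ℤ} {T : Finset (Fin n)}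
    (hA : TrivialOutside A T) {a b : Fin n} (hab : a ≠ b) (hb : b ∈ T) (t : ℤ) :
    TrivialOutside (rankOne (basisVec a) (Pi.single b t) * A) T := by
  intro j hj i
  have hbj : b ≠ j := fun h => hj (h ▸ hb)
  rw [elementary_mul_apply hab, hA j hj, hA j hj]
  simp [hbj]

lemma TrivialOutside.exists_unimodular {A : SpecialLinearGroup (Fin n) ℤ} {T : Finset (Fin n)}
    (hA : TrivialOutside A T) {s : Fin n} (hs : s ∈ T) :
    ∃ b : Fin n → ℤ, ∑ i ∈ T, b i * A i s = 1 := by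
  have hinv : ((A⁻¹ : SpecialLinearGroup (Fin n) ℤ) : Matrix (Fin n) (Fin n) ℤ) *
      (A : Matrix (Fin n) (Fin n) ℤ) = 1 := by
    rw [← Matrix.SpecialLinearGroup.coe_mul, inv_mul_cancel, Matrix.SpecialLinearGroup.coe_one]
  have hrow : ∀ j, ∑ i, (A⁻¹ : SpecialLinearGroup (Fin n) ℤ) s i * A i j =
      if s = j then 1 else 0 := by
    intro j
    have h := congrFun (congrFun hinv s) j
    rwa [Matrix.mul_apply, Matrix.one_apply] at h
  refine ⟨fun i => (A⁻¹ : SpecialLinearGroup (Fin n) ℤ) s i, ?_⟩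
  have h1 := hrow s
  rw [if_pos rfl] at h1
  refine (Finset.sum_subset (Finset.subset_univ T) ?_).trans h1
  intro j _ hj
  -- the entry `(s, j)` of `A⁻¹ A` is the entry `(s, j)` of `A⁻¹`, since column `j` of `A` is `e_j`
  have h2 := hrow j
  have hsj : s ≠ j := fun h => hj (h ▸ hs)
  simp only [hA j hj, hsj, if_false, mul_ite, mul_one, mul_zero, Finset.sum_ite_eq',
    Finset.mem_univ, if_true] at h2
  exact mul_eq_zero_of_left h2 _

lemma TrivialOutside.diag_eq_one {A : SpecialLinearGroup (Fin n) ℤ} {s : Fin n}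
    (hA : TrivialOutside A {s}) : A s s = 1 := by
  have h : (A : Matrix (Fin n) (Fin n) ℤ) =
      1 + vecMulVec ((fun i => A i s) - basisVec s) (basisVec s) := by
    ext i j
    rw [Matrix.add_apply, vecMulVec_apply, Matrix.one_apply]
    by_cases hj : j = s
    · subst hj
      by_cases hi : i = j
      · subst hi; simp
      · simp [hi]
    · rw [hA j (by simpa using hj)]
      simp [hj]
  have hdet : (A : Matrix (Fin n) (Fin n) ℤ).det = 1 := A.2
  rw [h, vecMulVec_eq Unit, det_one_add_replicateCol_mul_replicateRow] at hdet
  simpa using hdet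

/-- Euclid's algorithm on the columns of `A`, one column at a time. Row operations that add
multiples of rows with index in `T` preserve `TrivialOutside A T`; they reduce the part of a column
`s ∈ T` lying in the rows of `T` to a single nonzero entry, which is a unit, and then turn the
column into `e_s`. -/
lemma HasLevel.mem_of_trivialOutside {H : Subgroup (SpecialLinearGroup (Fin n) ℤ)}
    (hH : HasLevel H 1) (T : Finset (Fin n)) :
    ∀ A : SpecialLinearGroup (Fin n) ℤ, TrivialOutside A T → A ∈ H := by
  induction T using Finset.induction_on with
  | empty =>
    intro A hA
    have : A = 1 := by
      ext i j
      rw [hA j (by simp), Matrix.SpecialLinearGroup.coe_one, Matrix.one_apply]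
    rw [this]
    exact H.one_mem
  | insert s S hs ih =>
    have hel : ∀ {a b : Fin n}, a ≠ b → ∀ t : ℤ,
        rankOne (basisVec a) (Pi.single b t) ∈ H := fun hab t => hH _ _ hab t (one_dvd t)
    have hclear : ∀ A : SpecialLinearGroup (Fin n) ℤ, TrivialOutside A (insert s S) →
        A s s = 1 → A ∈ H := by
      intro A hA hss
      have hy0 : (basisVec s - fun i => A i s) s = 0 := by simp [hss]
      have hg : rankOne (basisVec s - fun i => A i s) (basisVec s) ∈ H :=
        hH.col_mem hy0 fun j => one_dvd _
      refine (H.mul_mem_cancel_left hg).mp (ih _ ?_)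
      intro j hj i
      rw [Matrix.SpecialLinearGroup.coe_mul,
        rankOne_coe (by rw [single_dotProduct, hy0, mul_zero]), add_mul, one_mul,
        vecMulVec_mul, Matrix.add_apply, vecMulVec_apply, single_one_vecMul]
      by_cases hjs : j = s
      · subst hjs
        simp only [Pi.sub_apply, Matrix.row_apply, hss, mul_one, Pi.single_apply]
        ring
      · have hj' : j ∉ insert s S := by simp [hjs, hj]
        rw [Matrix.row_apply, hA j hj', hA j hj', if_neg (Ne.symm hjs), mul_zero, add_zero]
    have hfix : ∀ A : SpecialLinearGroup (Fin n) ℤ, TrivialOutside A (insert s S) →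
        ∀ t ∈ S, A t s * A t s = 1 → A ∈ H := by
      intro A hA t ht hunit
      have hst : s ≠ t := fun h => hs (h ▸ ht)
      refine (H.mul_mem_cancel_left (hel hst (A t s * (1 - A s s)))).mp (hclear _
        (hA.elementary_mul hst (by simp [ht]) _) ?_)
      rw [elementary_mul_apply hst, if_pos rfl]
      linear_combination (1 - A s s) * hunit
    suffices hmain : ∀ (d : ℕ) (A : SpecialLinearGroup (Fin n) ℤ),
        TrivialOutside A (insert s S) → ∑ i ∈ insert s S, (A i s).natAbs = d → A ∈ H from
      fun A hA => hmain _ A hA rfl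
    intro d
    induction d using Nat.strong_induction_on with
    | _ d ihd =>
    intro A hA hd
    by_cases hred : ∃ a ∈ insert s S, ∃ b ∈ insert s S, a ≠ b ∧ A b s ≠ 0 ∧
        (A b s).natAbs ≤ (A a s).natAbs
    · obtain ⟨a, ha, b, hb, hab, hb0, hle⟩ := hred
      obtain ⟨t, ht⟩ : ∃ t : ℤ, (A a s + t * A b s).natAbs < (A a s).natAbs := by
        rcases lt_or_gt_of_ne hb0 with h1 | h1 <;> rcases le_total (A a s) 0 with h2 | h2
        · exact ⟨-1, by omega⟩
        · exact ⟨1, by omega⟩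
        · exact ⟨1, by omega⟩
        · exact ⟨-1, by omega⟩
      refine (H.mul_mem_cancel_left (hel hab t)).mp
        (ihd _ ?_ _ (hA.elementary_mul hab hb t) rfl)
      rw [← hd]
      apply Finset.sum_lt_sum
      · intro i _
        rw [elementary_mul_apply hab]
        by_cases hi : i = a
        · subst hi; simpa using ht.le
        · simp [hi]
      · exact ⟨a, ha, by rw [elementary_mul_apply hab, if_pos rfl]; exact ht⟩
    · obtain ⟨b, hb⟩ := hA.exists_unimodular (Finset.mem_insert_self s S)
      obtain ⟨a, ha, ha0⟩ : ∃ a ∈ insert s S, A a s ≠ 0 := by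
        by_contra! h
        rw [Finset.sum_eq_zero fun i hi => by rw [h i hi, mul_zero]] at hb
        exact zero_ne_one hb
      have hzero : ∀ c ∈ insert s S, c ≠ a → A c s = 0 := by
        intro c hc hca
        by_contra hc0
        rcases le_total (A c s).natAbs (A a s).natAbs with h | h
        · exact hred ⟨a, ha, c, hc, hca.symm, hc0, h⟩
        · exact hred ⟨c, hc, a, ha, hca, ha0, h⟩
      rw [Finset.sum_eq_single_of_mem a ha fun c hc hca => by rw [hzero c hc hca, mul_zero]] at hb
      have hunit : A a s * A a s = 1 := by
        have hu : IsUnit (A a s) := isUnit_iff_exists_inv'.mpr ⟨b a, hb⟩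
        exact Int.isUnit_mul_self hu
      by_cases has : a = s
      · subst has
        rcases S.eq_empty_or_nonempty with hS | ⟨t, ht⟩
        · subst hS
          exact hclear A hA (TrivialOutside.diag_eq_one hA)
        · -- copy the unit entry into row `t`
          have hta : t ≠ a := fun h => hs (h ▸ ht)
          refine (H.mul_mem_cancel_left (hel hta (A a a))).mp (hfix _
            (hA.elementary_mul hta (by simp) _) t ht ?_)
          rw [elementary_mul_apply hta, if_pos rfl, hzero t (by simp [ht]) hta, hunit]
          norm_num
      · exact hfix A hA a ((Finset.mem_insert.mp ha).resolve_left has) hunit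

lemma HasLevel.mem_of_one {H : Subgroup (SpecialLinearGroup (Fin n) ℤ)} (hH : HasLevel H 1)
    (A : SpecialLinearGroup (Fin n) ℤ) : A ∈ H :=
  hH.mem_of_trivialOutside Finset.univ A fun j hj => absurd (Finset.mem_univ j) hj

/-! ### Schur's theorem and finiteness of the quotient -/

/-- Schur: a perfect group whose centre has finite index is finite. -/
lemma finite_of_perfect_of_center {G : Type*} [Group G] (hc : (Subgroup.center G).FiniteIndex)
    (hp : commutator G = ⊤) : Finite G := by
  have hfin : Finite (commutatorSet G) := by
    refine (Set.finite_range fun p : (G ⧸ Subgroup.center G) × (G ⧸ Subgroup.center G) =>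
      ⁅p.1.out, p.2.out⁆).subset ?_
    rintro _ ⟨g, h, rfl⟩
    refine ⟨(g, h), ?_⟩
    obtain ⟨⟨z, hz⟩, h1⟩ := QuotientGroup.mk_out_eq_mul (Subgroup.center G) g
    obtain ⟨⟨z', hz'⟩, h2⟩ := QuotientGroup.mk_out_eq_mul (Subgroup.center G) h
    simp only [h1, h2]
    have c1 := Subgroup.mem_center_iff.mp hz
    have c2 := Subgroup.mem_center_iff.mp hz'
    have e1 : (g * z) * (h * z') = (g * h) * (z * z') := by
      rw [mul_assoc, ← mul_assoc z, ← c1 h]; simp only [mul_assoc]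
    have e2 : (h * z') * (g * z) = (h * g) * (z * z') := by
      rw [mul_assoc h, ← mul_assoc z', ← c2 g, mul_assoc g, c1 z', mul_assoc]
    have e3 : ∀ a b : G, ⁅a, b⁆ = (a * b) * (b * a)⁻¹ := fun a b => by
      rw [commutatorElement_def]; group
    rw [e3, e3, e1, e2]
    group
  have : Finite (⊤ : Subgroup G) := hp ▸ (inferInstance : Finite (commutator G))
  exact Finite.of_equiv _ Subgroup.topEquiv.toEquiv

/-- A normal subgroup of `SL_n(ℤ)`, `n ≥ 3`, of positive level has finite index: the quotient is
perfect, and the image of a congruence subgroup is central in it. -/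
lemma HasLevel.finiteIndex {N : Subgroup (SpecialLinearGroup (Fin n) ℤ)} [N.Normal] {q : ℕ}
    (hN : HasLevel N q) (hn : 3 ≤ n) (hq : q ≠ 0) : N.FiniteIndex := by
  have : NeZero q := ⟨hq⟩
  have hsurj := QuotientGroup.mk'_surjective N
  have hcenter : (Subgroup.center (SpecialLinearGroup (Fin n) ℤ ⧸ N)).FiniteIndex := by
    have hle : (Matrix.SpecialLinearGroup.map (n := Fin n) (Int.castRingHom (ZMod q))).ker ≤
        (Subgroup.center (SpecialLinearGroup (Fin n) ℤ ⧸ N)).comap (QuotientGroup.mk' N) := by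
      intro A hA
      rw [Subgroup.mem_comap, Subgroup.mem_center_iff]
      intro g
      obtain ⟨B, rfl⟩ := hsurj g
      have hlev : HasLevel ((Subgroup.centralizer {QuotientGroup.mk' N A}).comap
          (QuotientGroup.mk' N)) 1 := by
        intro i j hij t _
        rw [Subgroup.mem_comap, Subgroup.mem_centralizer_singleton_iff]
        have h := hN.mk_conj hn hA hij t
        rw [map_mul, map_mul, map_inv, mul_inv_eq_iff_eq_mul] at h
        exact h.symm
      have hB := hlev.mem_of_one B
      rwa [Subgroup.mem_comap, Subgroup.mem_centralizer_singleton_iff] at hB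
    have := Subgroup.finiteIndex_of_le hle
    refine ⟨?_⟩
    rw [← Subgroup.index_comap_of_surjective _ hsurj]
    exact Subgroup.FiniteIndex.index_ne_zero
  have hperf : commutator (SpecialLinearGroup (Fin n) ℤ ⧸ N) = ⊤ := by
    rw [eq_top_iff]
    intro g _
    obtain ⟨B, rfl⟩ := hsurj g
    have hlev : HasLevel ((commutator (SpecialLinearGroup (Fin n) ℤ ⧸ N)).comap
        (QuotientGroup.mk' N)) 1 := by
      intro i j hij t _
      obtain ⟨l, hli, hlj⟩ := exists_third hn i j
      rw [Subgroup.mem_comap, ← rankOne_commutator (l := l) (by simp [hij]) (by simp [hli])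
        (by simp [hlj]), map_commutatorElement]
      exact Subgroup.commutator_mem_commutator (Subgroup.mem_top _) (Subgroup.mem_top _)
    exact hlev.mem_of_one B
  have := finite_of_perfect_of_center hcenter hperf
  exact Subgroup.finiteIndex_of_finite_quotient

/-- A subgroup of `SL_n(ℤ)`, `n ≥ 3`, of positive level `m` has finite index: it contains the
normal closure of the elementary matrices of level `m²`. -/
lemma HasLevel.finiteIndex_of_subgroup {H : Subgroup (SpecialLinearGroup (Fin n) ℤ)} {m : ℕ}
    (hH : HasLevel H m) (hn : 3 ≤ n) (hm : m ≠ 0) : H.FiniteIndex := by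
  set X : Set (SpecialLinearGroup (Fin n) ℤ) :=
    {g | ∃ i j : Fin n, i ≠ j ∧ ∃ a : ℤ, (m * m : ℤ) ∣ a ∧
      g = rankOne (basisVec i) (Pi.single j a)} with hX
  have hlev : HasLevel (Subgroup.normalClosure X) ((m * m : ℕ) : ℤ) := by
    intro i j hij a ha
    exact Subgroup.subset_normalClosure ⟨i, j, hij, a, by exact_mod_cast ha, rfl⟩
  have hle : Subgroup.normalClosure X ≤ H := by
    rw [Subgroup.normalClosure, Subgroup.closure_le]
    intro x hx
    obtain ⟨_, ⟨i, j, hij, a, ha, rfl⟩, hconj⟩ := Group.mem_conjugatesOfSet_iff.mp hx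
    obtain ⟨g, rfl⟩ := isConj_iff.mp hconj
    have hinv : ((g⁻¹ : SpecialLinearGroup (Fin n) ℤ) : Matrix (Fin n) (Fin n) ℤ) *
        (g : Matrix (Fin n) (Fin n) ℤ) = 1 := by
      rw [← Matrix.SpecialLinearGroup.coe_mul, inv_mul_cancel,
        Matrix.SpecialLinearGroup.coe_one]
    have hs : (Pi.single j a : Fin n → ℤ) = a • basisVec j := by
      rw [← Pi.single_smul]; simp
    rw [SetLike.mem_coe, rankOne_conj g (by simp [hij.symm]), hs, smul_vecMul]
    refine hH.rankOne_mem hn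
      (w := basisVec i ᵥ* ((g⁻¹ : SpecialLinearGroup (Fin n) ℤ) : Matrix (Fin n) (Fin n) ℤ))
      ?_ ?_ ha
    · rw [← dotProduct_mulVec, mulVec_mulVec, hinv, one_mulVec]; simp
    · rw [← dotProduct_mulVec, mulVec_mulVec, hinv, one_mulVec]; simp [hij.symm]
  have := hlev.finiteIndex hn (mul_ne_zero hm hm)
  exact Subgroup.finiteIndex_of_le hle

end ParabolicUnipotent

open ParabolicUnipotent

/-- For `n ≥ 3`, an ordered partition of `{1,…,n}` into `r ≥ 2` consecutive
blocks of positive sizes (encoded by a monotone surjection `β : Fin n → Fin r` whose fibres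
are the blocks `B₁,…,B_r`), and `k ≥ 1`: the subgroup of `SL_n(ℤ)` generated by `U_Q⁺(kℤ)`
(matrices `I + X` with `X i j = 0` unless `i ∈ B_s`, `j ∈ B_t` with `s < t`, entries of `X`
divisible by `k`) and the analogous `U_Q⁻(kℤ)` (with `s > t`) has finite index. -/
theorem parabolic_unipotent_generators_finite_index (n r k : ℕ)
    (hn : 3 ≤ n) (hr : 2 ≤ r) (hk : 1 ≤ k)
    (β : Fin n → Fin r) (hmono : Monotone β) (hsurj : Function.Surjective β) :
    (Subgroup.closure
      ({g : Matrix.SpecialLinearGroup (Fin n) ℤ |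
          ∀ i j : Fin n, if i = j then g.1 i j = 1
            else if β i < β j then (k : ℤ) ∣ g.1 i j
            else g.1 i j = 0} ∪
       {g : Matrix.SpecialLinearGroup (Fin n) ℤ |
          ∀ i j : Fin n, if i = j then g.1 i j = 1
            else if β j < β i then (k : ℤ) ∣ g.1 i j
            else g.1 i j = 0})).FiniteIndex := by
  set Γ := Subgroup.closure (_ : Set (Matrix.SpecialLinearGroup (Fin n) ℤ))
  -- elementary matrices of level `k` whose indices lie in different blocks are generators
  have hgen : ∀ i j : Fin n, β i ≠ β j → ∀ a : ℤ, (k : ℤ) ∣ a →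
      rankOne (basisVec i) (Pi.single j a) ∈ Γ := by
    intro i j hβ a ha
    have hij : i ≠ j := fun h => hβ (congrArg β h)
    have hentry : ∀ x y, (rankOne (basisVec i) (Pi.single j a)).1 x y =
        (if x = y then 1 else 0) + if x = i ∧ y = j then a else 0 := by
      intro x y
      rw [rankOne_coe (by simp [hij.symm]), Matrix.add_apply, Matrix.one_apply,
        Matrix.vecMulVec_apply]
      by_cases hx : x = i <;> by_cases hy : y = j <;> simp [hx, hy]
    apply Subgroup.subset_closure
    rcases lt_or_gt_of_ne hβ with h | h
    on_goal 1 => left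
    on_goal 2 => right
    all_goals
      intro x y
      rw [hentry]
      by_cases hxy : x = y
      · have : ¬ (x = i ∧ y = j) := fun ⟨h1, h2⟩ => hij (h1 ▸ h2 ▸ hxy)
        simp [hxy] at this ⊢
        exact fun h1 h2 => absurd h2 (this h1)
      · by_cases hp : x = i ∧ y = j
        · obtain ⟨rfl, rfl⟩ := hp
          simp [hij, h, ha]
        · simp [hxy, hp]
  have hlev : HasLevel Γ ((k * k : ℕ) : ℤ) := by
    intro i j hij a ha
    push_cast at ha
    by_cases hβ : β i = β j
    · -- route through an index `l` in another block
      obtain ⟨l, hl⟩ : ∃ l, β l ≠ β i := by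
        have : Nontrivial (Fin r) := Fin.nontrivial_iff_two_le.mpr hr
        obtain ⟨s, hs⟩ := exists_ne (β i)
        obtain ⟨l, rfl⟩ := hsurj s
        exact ⟨l, hs⟩
      have hli : l ≠ i := fun h => hl (congrArg β h)
      have hlj : l ≠ j := fun h => hl ((congrArg β h).trans hβ.symm)
      obtain ⟨c, rfl⟩ := ha
      have e1 : (Pi.single j ((k : ℤ) * k * c) : Fin n → ℤ) =
          (k : ℤ) • (Pi.single j ((k : ℤ) * c) : Fin n → ℤ) := by
        rw [← Pi.single_smul, smul_eq_mul, mul_assoc]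
      have e2 : (k : ℤ) • (basisVec l : Fin n → ℤ) = Pi.single l (k : ℤ) := by
        rw [← Pi.single_smul, smul_eq_mul, mul_one]
      rw [e1, ← rankOne_smul _ (by simp [hij.symm]),
        ← rankOne_commutator (l := l) (by simp [hij]) (by simp [hli]) (by simp [hlj]),
        rankOne_smul _ (by simp [hli]), e2]
      have h1 := hgen i l hl.symm k dvd_rfl
      have h2 := hgen l j (hβ ▸ hl) (k * c) (dvd_mul_right _ _)
      exact Γ.mul_mem (Γ.mul_mem (Γ.mul_mem h1 h2) (Γ.inv_mem h1)) (Γ.inv_mem h2)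
    · exact hgen i j hβ a ((dvd_mul_right _ _).trans ha)
  exact hlev.finiteIndex_of_subgroup hn (mul_ne_zero (by omega) (by omega))
end
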